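/- Fix an integer δ > 2. Suppose a 2-connected finite simple graph G satisfying (♠)_δ has an edge e = uv of weight 1. Then G∖{u,v} has exactly δ−1 connected components, and G is the gluing along e of graphs G_1, …, G_{δ−1} each satisfying (♠)_δ, where G_i is the subgraph of G induced on the union of {u,v} and the i-th connected component of G∖{u,v} (with the edge e included in each G_i, where it has weight δ−1). -/

import Mathlib

/-!
For a 2-connected graph `G` both notions of contraction become statements about induced
subgraphs: `G/uv` is 2-connected iff `G ∖ {u, v}` is connected (`contract_edge_iff`), and `S` is a good
flat iff `G[S]` is 2-connected and `G[V ∖ S]` is connected (`isGoodFlat_iff`).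

Since `w(uv) = 1 ≠ δ - 1`, the edge `uv` is not contractible and `G ∖ {u, v}` is disconnected. For each
component `C`, the complement of `C` is a good flat, so the edges meeting `C` have total weight
`δ|C| + 1`. Every edge other than `uv` meets exactly one component, and comparing with
`w(E) = δ(|V| - 1)` shows that there are `δ - 1` components (`comp_count`).

The side `G[C ∪ {u, v}]` is obtained from `G` by replacing the other components by the edge `uv`.
Quite generally, if `{x, y}` cuts off a set `B`, then `B` can be replaced by an edge `xy`. This preserves
2-connectedness (`Sep.tc_reduce`), flats of the reduced graph lift to flats of the original one
(`Sep.flat_in`, `Sep.flat_out`), and there is exactly one change of the weight of `xy` that preserves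
the equations for the total weight and the flats (`Sep.total`, `Sep.flats`). For the side this change
turns the weight `1` of `uv` into `δ - 1`.

What remains is that the new weight is canonical. Deletable and contractible edges of the side
other than `uv` are so in `G`. The edge `uv` is contractible in the side because `C` is connected, and
it is not deletable there by `no_both`: for `δ ≥ 3` the equations exclude edges that are both.
By induction along 2-separations this is reduced to the 3-connected case with `n ≥ 4` vertices,
where every complement of a vertex is a flat, all stars have weight `δ + 1`, and double counting
gives `n(δ + 1) = 2δ(n - 1)`, that is `(n - 2)(δ - 1) = 2`, which is impossible.
-/

open SimpleGraph
open scoped Pointwise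

namespace Gor

/-! ### Graph-theoretic notions -/

/-- A graph is `2`-connected if it is connected and remains connected after deletion of any
single vertex.  A single edge `K₂` counts as `2`-connected. -/
def IsTwoConnected {V : Type*} (G : SimpleGraph V) : Prop :=
  G.Connected ∧ ∀ v : V, (G.induce {u : V | u ≠ v}).Connected

/-- `E(S)`: the set of edges of `G` with both endpoints in `S`. -/
def edgesIn {V : Type*} (G : SimpleGraph V) (S : Set V) : Set (Sym2 V) :=
  {e ∈ G.edgeSet | ∀ v ∈ e, v ∈ S}

/-- The simple graph obtained from `G` by contracting all edges in `F`: its vertices are the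
connected components of the graph with edge set `F`, two being adjacent if some edge of `G`
joins them. -/
def contractEdges {V : Type*} (G : SimpleGraph V) (F : Set (Sym2 V)) :
    SimpleGraph (SimpleGraph.fromEdgeSet F).ConnectedComponent :=
  SimpleGraph.fromRel fun c d => ∃ u v : V, G.Adj u v ∧
    (SimpleGraph.fromEdgeSet F).connectedComponentMk u = c ∧
    (SimpleGraph.fromEdgeSet F).connectedComponentMk v = d

/-- `S` is a good flat of `G`: the induced subgraph `G[S]` is `2`-connected and the contraction
of all edges of `E(S)` in `G` is `2`-connected. -/
def IsGoodFlat {V : Type*} (G : SimpleGraph V) (S : Set V) : Prop :=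
  IsTwoConnected (G.induce S) ∧ IsTwoConnected (contractEdges G (edgesIn G S))

/-- The weight function `w : E → {1, δ-1}` with `w e = 1` whenever `G∖e` is `2`-connected and
`w e = δ - 1` whenever `G/e` is `2`-connected. -/
def IsCanonicalWeight {V : Type*} (G : SimpleGraph V) (δ : ℕ) (w : Sym2 V → ℕ) : Prop :=
  (∀ e ∈ G.edgeSet, w e = 1 ∨ w e = δ - 1) ∧
  (∀ e ∈ G.edgeSet, IsTwoConnected (G.deleteEdges {e}) → w e = 1) ∧
  (∀ e ∈ G.edgeSet, IsTwoConnected (contractEdges G {e}) → w e = δ - 1)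

/-- A `2`-connected graph `G` satisfies `(♠)_δ` via the weight function `w`. -/
def SatisfiesSpade {V : Type*} (G : SimpleGraph V) (δ : ℕ) (w : Sym2 V → ℕ) : Prop :=
  IsTwoConnected G ∧ IsCanonicalWeight G δ w ∧
  (∑ᶠ e ∈ G.edgeSet, w e) = δ * (Nat.card V - 1) ∧
  ∀ S : Set V, IsGoodFlat G S → (∑ᶠ e ∈ edgesIn G S, w e) + 1 = δ * (S.ncard - 1)

/-- The number of `2`-connected components (blocks) of a graph: the number of inclusion-maximal
vertex subsets inducing a `2`-connected subgraph. -/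
noncomputable def numBlocks {V : Type*} (G : SimpleGraph V) : ℕ :=
  {S : Set V | IsTwoConnected (G.induce S) ∧
    ∀ T : Set V, S ⊆ T → IsTwoConnected (G.induce T) → S = T}.ncard

/-! ### Lattice polytopes and the Gorenstein property -/

/-- A point of `ℝ^η` is a lattice point if all its coordinates are integers. -/
def IsLatticePoint {η : Type*} (x : η → ℝ) : Prop := ∀ i, ∃ z : ℤ, x i = z

/-- The cone over a polytope `P ⊆ ℝ^η`, living in `ℝ^η × ℝ`. -/
def coneOver {η : Type*} (P : Set (η → ℝ)) : Set ((η → ℝ) × ℝ) :=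
  {y | ∃ t : ℝ, ∃ p ∈ P, 0 ≤ t ∧ y = (t • p, t)}

/-- The lattice affinely spanned by the lattice points of `P`, placed at height one;
i.e. the subgroup of `ℝ^η × ℝ` generated by `{(p, 1) : p a lattice point of P}`. -/
def coneLattice {η : Type*} (P : Set (η → ℝ)) : Submodule ℤ ((η → ℝ) × ℝ) :=
  Submodule.span ℤ {y | ∃ p ∈ P, IsLatticePoint p ∧ y = (p, 1)}

/-- `h` is a linear form cutting out a facet-supporting hyperplane of the cone over `P`:
it is nonnegative on the cone and vanishes on a subset of the cone spanning one dimension less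
than the cone itself. -/
def IsFacetForm {η : Type*} (P : Set (η → ℝ)) (h : ((η → ℝ) × ℝ) →ₗ[ℝ] ℝ) : Prop :=
  (∀ y ∈ coneOver P, 0 ≤ h y) ∧
  Module.finrank ℝ (Submodule.span ℝ {y ∈ coneOver P | h y = 0}) + 1 =
    Module.finrank ℝ (Submodule.span ℝ (coneOver P))

/-- `h` is reduced with respect to the lattice spanned by `P`: it takes integer values on the
lattice and attains the value `1` there. -/
def IsReducedForm {η : Type*} (P : Set (η → ℝ)) (h : ((η → ℝ) × ℝ) →ₗ[ℝ] ℝ) : Prop :=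
  (∀ y ∈ coneLattice P, ∃ z : ℤ, h y = z) ∧ ∃ y ∈ coneLattice P, h y = 1

/-- A polytope `P`, regarded as full-dimensional in the affine lattice it spans, is
`δ`-Gorenstein if there is a lattice point `v ∈ δP` with `h (v, δ) = 1` for the reduced
equation `h` of every facet-supporting hyperplane of the cone over `P`. -/
def IsDeltaGorenstein {η : Type*} (P : Set (η → ℝ)) (δ : ℕ) : Prop :=
  ∃ v : η → ℝ, v ∈ (δ : ℝ) • P ∧ (v, (δ : ℝ)) ∈ coneLattice P ∧
    ∀ h : ((η → ℝ) × ℝ) →ₗ[ℝ] ℝ, IsFacetForm P h → IsReducedForm P h → h (v, (δ : ℝ)) = 1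

/-- A polytope is Gorenstein if it is `δ`-Gorenstein for some positive integer `δ`. -/
def IsGorenstein {η : Type*} (P : Set (η → ℝ)) : Prop :=
  ∃ δ : ℕ, 0 < δ ∧ IsDeltaGorenstein P δ

/-! ### Graphic matroids of simple graphs and their polytopes -/

/-- An independent set of the graphic matroid of `G`: a set of edges forming a forest. -/
def IsGraphicIndep {V : Type*} (G : SimpleGraph V) (I : Set (Sym2 V)) : Prop :=
  I ⊆ G.edgeSet ∧ (SimpleGraph.fromEdgeSet I).IsAcyclic

/-- A basis of the graphic matroid of `G`: a maximal forest (spanning forest). -/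
def IsGraphicBasis {V : Type*} (G : SimpleGraph V) (B : Set (Sym2 V)) : Prop :=
  IsGraphicIndep G B ∧ ∀ e ∈ G.edgeSet, e ∉ B → ¬ IsGraphicIndep G (insert e B)

/-- The base polytope `B(M(G))` of the graphic matroid of `G`: the convex hull of the
indicator vectors of the bases. -/
def basePolytope {V : Type*} (G : SimpleGraph V) : Set (Sym2 V → ℝ) :=
  convexHull ℝ {x | ∃ B : Set (Sym2 V), IsGraphicBasis G B ∧
    x = B.indicator fun _ => (1 : ℝ)}

/-- The base polytope `B(M(G))`, regarded inside `ℝ^E` where `E` is the edge set of `G`. -/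
def basePolytopeE {V : Type*} (G : SimpleGraph V) : Set (↥G.edgeSet → ℝ) :=
  convexHull ℝ {x | ∃ B : Set (Sym2 V), IsGraphicBasis G B ∧
    x = (Subtype.val ⁻¹' B).indicator fun _ => (1 : ℝ)}

/-- A homogeneous inequality `g x ≥ 0` is valid for `P` and defines a facet (a supporting
hyperplane whose intersection with `P` has affine dimension one less than `P`). -/
def IsSupportingFaceIneq {α : Type*} (P : Set (α → ℝ)) (g : (α → ℝ) → ℝ) : Prop :=
  (∀ x ∈ P, 0 ≤ g x) ∧
  Module.finrank ℝ (vectorSpan ℝ {x ∈ P | g x = 0}) + 1 =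
    Module.finrank ℝ (vectorSpan ℝ P)

/-! ### Multigraphs -/

/-- A finite undirected loopless multigraph on a vertex type `V` with edge type `E`. -/
structure Multigraph (V E : Type*) where
  ends : E → Sym2 V
  loopless : ∀ e, ¬ (ends e).IsDiag

/-- The underlying simple graph of a multigraph. -/
def Multigraph.toSimple {V E : Type*} (G : Multigraph V E) : SimpleGraph V :=
  SimpleGraph.fromEdgeSet (Set.range G.ends)

/-- `E(S)` for a multigraph: the set of edges with both endpoints in `S`. -/
def Multigraph.edgesIn {V E : Type*} (G : Multigraph V E) (S : Set V) : Set E :=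
  {e | ∀ v ∈ G.ends e, v ∈ S}

/-- A set of edges of a multigraph is a forest (an independent set of the graphic matroid):
no two parallel edges and no cycle. -/
def IsMultiForest {V E : Type*} (G : Multigraph V E) (I : Set E) : Prop :=
  Set.InjOn G.ends I ∧ (SimpleGraph.fromEdgeSet (G.ends '' I)).IsAcyclic

/-- The independence polytope `P(M(G))` of the graphic matroid of a multigraph `G`. -/
def multiIndepPolytope {V E : Type*} (G : Multigraph V E) : Set (E → ℝ) :=
  convexHull ℝ {x | ∃ I : Set E, IsMultiForest G I ∧ x = I.indicator fun _ => (1 : ℝ)}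

/-- The rank of a set of edges in the graphic matroid of a multigraph. -/
noncomputable def mrank {V E : Type*} (G : Multigraph V E) (A : Set E) : ℕ :=
  sSup {n | ∃ I ⊆ A, IsMultiForest G I ∧ I.ncard = n}

/-- A flat of the graphic matroid of a multigraph: adding any further edge increases the rank. -/
def IsGraphicFlat {V E : Type*} (G : Multigraph V E) (A : Set E) : Prop :=
  ∀ e : E, e ∉ A → mrank G (insert e A) ≠ mrank G A

/-- A circuit of the graphic matroid of a multigraph: a minimal dependent set of edges. -/
def IsMultiCircuit {V E : Type*} (G : Multigraph V E) (C : Set E) : Prop :=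
  ¬ IsMultiForest G C ∧ ∀ C' ⊂ C, IsMultiForest G C'

/-- The restriction of the graphic matroid of `G` to `A` is a connected matroid:
`A` is nonempty and any two distinct elements of `A` lie on a common circuit inside `A`. -/
def ConnectedRestriction {V E : Type*} (G : Multigraph V E) (A : Set E) : Prop :=
  A.Nonempty ∧ ∀ e ∈ A, ∀ f ∈ A, e ≠ f → ∃ C ⊆ A, IsMultiCircuit G C ∧ e ∈ C ∧ f ∈ C

/-- `G` is the `m`-blow-up of the simple graph `H`: every edge of `H` is replaced by exactly
`m` parallel edges and there are no other edges. -/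
def IsBlowUp {V E : Type*} (G : Multigraph V E) (m : ℕ) (H : SimpleGraph V) : Prop :=
  (∀ p ∈ H.edgeSet, {e : E | G.ends e = p}.ncard = m) ∧
  ∀ p : Sym2 V, p ∉ H.edgeSet → {e : E | G.ends e = p} = ∅

/-- The condition `(♣)_δ`: `(δ-1)|E(S)| + 1 = δ(|S|-1)` for every vertex subset `S` inducing a
`2`-connected subgraph. -/
def ClubCond {V : Type*} (H : SimpleGraph V) (δ : ℕ) : Prop :=
  ∀ S : Set V, IsTwoConnected (H.induce S) →
    (δ - 1) * (edgesIn H S).ncard + 1 = δ * (S.ncard - 1)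

/-! ### Chordality, `K₄` minors, cycle attachments -/

/-- A chordless cycle: a cycle such that every edge of `G` between vertices of the cycle is an
edge of the cycle. -/
def IsChordlessCycle {V : Type*} (G : SimpleGraph V) {v : V} (c : G.Walk v v) : Prop :=
  c.IsCycle ∧ ∀ e ∈ edgesIn G {u : V | u ∈ c.support}, e ∈ c.edges

/-- `G` is `δ`-chordal: every cycle without a chord has exactly `δ + 1` edges. -/
def IsDeltaChordal {V : Type*} (G : SimpleGraph V) (δ : ℕ) : Prop :=
  ∀ (v : V) (c : G.Walk v v), IsChordlessCycle G c → c.length = δ + 1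

/-- `G` has a `K₄` minor: there are four disjoint nonempty connected branch sets pairwise
joined by an edge. -/
def HasK4Minor {V : Type*} (G : SimpleGraph V) : Prop :=
  ∃ B : Fin 4 → Set V, (∀ i, (B i).Nonempty) ∧ (∀ i, (G.induce (B i)).Connected) ∧
    (Pairwise fun i j => Disjoint (B i) (B j)) ∧
    (Pairwise fun i j => ∃ u ∈ B i, ∃ v ∈ B j, G.Adj u v)

/-- One step of attaching a new `(δ+1)`-cycle to an edge: `B` is obtained from `A` by adding
`δ - 1` new vertices forming a path of length `δ` between the endpoints of an edge of
`H[A]`, these being all new edges. -/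
def AttachStep {V : Type*} (H : SimpleGraph V) (δ : ℕ) (A B : Set V) : Prop :=
  ∃ q : Fin (δ + 1) → V, Function.Injective q ∧
    H.Adj (q 0) (q (Fin.last δ)) ∧ q 0 ∈ A ∧ q (Fin.last δ) ∈ A ∧
    (∀ i : Fin (δ + 1), i ≠ 0 → i ≠ Fin.last δ → q i ∉ A) ∧
    B = A ∪ {x | ∃ i : Fin (δ + 1), i ≠ 0 ∧ i ≠ Fin.last δ ∧ q i = x} ∧
    edgesIn H B = edgesIn H A ∪ {e | ∃ i : Fin δ, e = s(q i.castSucc, q i.succ)}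

/-- `H` can be constructed from the clique `K₂` by repeatedly attaching new `(δ+1)`-cycles to
edges of the preceding graph. -/
def ConstructibleFromK2 {V : Type*} (H : SimpleGraph V) (δ : ℕ) : Prop :=
  ∃ (k : ℕ) (S : Fin (k + 1) → Set V),
    (∃ u v : V, H.Adj u v ∧ S 0 = {u, v}) ∧
    S (Fin.last k) = Set.univ ∧
    ∀ i : Fin k, AttachStep H δ (S i.castSucc) (S i.succ)

/-! ### Gluings, subdivisions, collisions, ears -/

/-- `G` (with distinguished edge `ab`) is the gluing of the graphs `Gs i` along the edges
`es i`: the disjoint union with all the edges `es i` identified to the single edge `ab`. -/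
def IsGluing {ι : Type*} {Vf : ι → Type*} {W : Type*} (Gs : ∀ i, SimpleGraph (Vf i))
    (es : ∀ i, Sym2 (Vf i)) (G : SimpleGraph W) (a b : W) : Prop :=
  a ≠ b ∧ G.Adj a b ∧
  ∃ φ : ∀ i, Vf i → W,
    (∀ i, Function.Injective (φ i)) ∧
    (∀ x : W, ∃ i, x ∈ Set.range (φ i)) ∧
    (∀ i, Sym2.map (φ i) (es i) = s(a, b)) ∧
    (∀ i j, i ≠ j → Set.range (φ i) ∩ Set.range (φ j) = {a, b}) ∧
    ∀ x y : W, G.Adj x y ↔ ∃ i, ∃ u v, (Gs i).Adj u v ∧ φ i u = x ∧ φ i v = y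

/-- `G'` together with the path `q` is the subdivision of `G` obtained by replacing the edge
`uv` by a path of `m` edges `q 0, …, q m` through new vertices. -/
def IsSubdivisionAt {V W : Type*} (G : SimpleGraph V) (u v : V) {m : ℕ}
    (G' : SimpleGraph W) (q : Fin (m + 1) → W) : Prop :=
  ∃ φ : V → W, Function.Injective φ ∧ Function.Injective q ∧
    q 0 = φ u ∧ q (Fin.last m) = φ v ∧
    (∀ i : Fin (m + 1), i ≠ 0 → i ≠ Fin.last m → q i ∉ Set.range φ) ∧
    (∀ x : W, x ∈ Set.range φ ∨ x ∈ Set.range q) ∧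
    ∀ x y : W, G'.Adj x y ↔
      ((∃ a b : V, G.Adj a b ∧ s(a, b) ≠ s(u, v) ∧ φ a = x ∧ φ b = y) ∨
       ∃ i : Fin m, s(x, y) = s(q i.castSucc, q i.succ))

/-- `G` (with the distinguished nonadjacent pair `a b`) is the collision of `G₁` and `G₂` on
the edges `e₁, e₂`: the disjoint union with `e₁` and `e₂` identified and then deleted. -/
def IsCollision {V₁ V₂ W : Type*} (G₁ : SimpleGraph V₁) (G₂ : SimpleGraph V₂)
    (e₁ : Sym2 V₁) (e₂ : Sym2 V₂) (G : SimpleGraph W) (a b : W) : Prop :=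
  a ≠ b ∧ ¬ G.Adj a b ∧
  ∃ (φ₁ : V₁ → W) (φ₂ : V₂ → W),
    Function.Injective φ₁ ∧ Function.Injective φ₂ ∧
    Sym2.map φ₁ e₁ = s(a, b) ∧ Sym2.map φ₂ e₂ = s(a, b) ∧
    (∀ x : W, x ∈ Set.range φ₁ ∨ x ∈ Set.range φ₂) ∧
    Set.range φ₁ ∩ Set.range φ₂ = {a, b} ∧
    ∀ x y : W, G.Adj x y ↔
      ((∃ u v, G₁.Adj u v ∧ s(u, v) ≠ e₁ ∧ φ₁ u = x ∧ φ₁ v = y) ∨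
       (∃ u v, G₂.Adj u v ∧ s(u, v) ≠ e₂ ∧ φ₂ u = x ∧ φ₂ v = y))

/-- The inner vertices of an ear. -/
def earInner {V : Type*} {s : ℕ} (p : Fin (s + 1) → V) : Set V :=
  {x | ∃ i : Fin (s + 1), i ≠ 0 ∧ i ≠ Fin.last s ∧ p i = x}

/-- The edges of an ear. -/
def earEdges {V : Type*} {s : ℕ} (p : Fin (s + 1) → V) : Set (Sym2 V) :=
  {e | ∃ i : Fin s, e = s(p i.castSucc, p i.succ)}

/-- An `s`-ear of `G`: a path with `s` edges whose inner vertices have degree `2` in `G`. -/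
def IsEar {V : Type*} (G : SimpleGraph V) {s : ℕ} (p : Fin (s + 1) → V) : Prop :=
  Function.Injective p ∧ (∀ i : Fin s, G.Adj (p i.castSucc) (p i.succ)) ∧
  ∀ i : Fin (s + 1), i ≠ 0 → i ≠ Fin.last s → (G.neighborSet (p i)).ncard = 2

/-- `T` is the vertex set of an inclusion-maximal proper `2`-connected induced subgraph. -/
def IsMaxProperTwoConnected {V : Type*} (G : SimpleGraph V) (T : Set V) : Prop :=
  IsTwoConnected (G.induce T) ∧ T ≠ Set.univ ∧
  ∀ T' : Set V, T ⊆ T' → T' ≠ Set.univ → IsTwoConnected (G.induce T') → T' = T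

/-! ### `(♠)₂` and `3`-connectivity -/

/-- A `2`-connected graph satisfies the equalities `(♠)₂`:
`|E| = 2(|V|-1)` and `|E(S)| = 2|S| - 3` for every good flat `S`. -/
def Spade2 {V : Type*} (G : SimpleGraph V) : Prop :=
  IsTwoConnected G ∧ G.edgeSet.ncard = 2 * (Nat.card V - 1) ∧
  ∀ S : Set V, IsGoodFlat G S → (edgesIn G S).ncard = 2 * S.ncard - 3

/-- A graph is `3`-connected if it has more than `3` vertices and remains connected after
deletion of any two vertices. -/
def IsThreeConnected {V : Type*} (G : SimpleGraph V) : Prop :=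
  3 < Nat.card V ∧ ∀ u v : V, (G.induce {x : V | x ≠ u ∧ x ≠ v}).Connected

/-! ### Inductive constructions -/

/-- Graphs obtainable from the `δ`-cycle by gluings (Proposition `construction1`) and
`(δ-1)`-subdivisions (Proposition `construction2`). -/
inductive Obtainable (δ : ℕ) : {W : Type} → SimpleGraph W → Prop
  | cycle {W : Type} (G : SimpleGraph W) (e : G ≃g SimpleGraph.cycleGraph δ) :
      Obtainable δ G
  | glue {Vf : Fin (δ - 1) → Type} {W : Type}
      (Gs : ∀ i, SimpleGraph (Vf i)) (ws : ∀ i, Sym2 (Vf i) → ℕ) (es : ∀ i, Sym2 (Vf i))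
      (G : SimpleGraph W) (a b : W)
      (hob : ∀ i, Obtainable δ (Gs i))
      (hsp : ∀ i, SatisfiesSpade (Gs i) δ (ws i))
      (hes : ∀ i, es i ∈ (Gs i).edgeSet)
      (hwe : ∀ i, ws i (es i) = δ - 1)
      (hgl : IsGluing Gs es G a b) : Obtainable δ G
  | subdivide {V W : Type} (G : SimpleGraph V) (w : Sym2 V → ℕ) (u v : V)
      (G' : SimpleGraph W) (q : Fin (δ - 1 + 1) → W)
      (hob : Obtainable δ G) (hsp : SatisfiesSpade G δ w)
      (huv : G.Adj u v) (hw1 : w s(u, v) = 1)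
      (hsub : IsSubdivisionAt G u v G' q) : Obtainable δ G'

/-- Graphs obtainable from the clique `K₄` by a finite sequence of collisions. -/
inductive ObtainableK4 : {W : Type} → SimpleGraph W → Prop
  | k4 {W : Type} (G : SimpleGraph W) (e : G ≃g (⊤ : SimpleGraph (Fin 4))) :
      ObtainableK4 G
  | collide {V₁ V₂ W : Type} (G₁ : SimpleGraph V₁) (G₂ : SimpleGraph V₂)
      (e₁ : Sym2 V₁) (e₂ : Sym2 V₂) (G : SimpleGraph W) (a b : W)
      (h₁ : ObtainableK4 G₁) (h₂ : ObtainableK4 G₂)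
      (he₁ : e₁ ∈ G₁.edgeSet) (he₂ : e₂ ∈ G₂.edgeSet)
      (hc : IsCollision G₁ G₂ e₁ e₂ G a b) : ObtainableK4 G

/-! ### Connectivity of induced subgraphs and 2-separations -/

/-- `Cn G A`: the induced subgraph `G[A]` is connected. Encoded as: `A` is nonempty and every
predicate closed under the adjacencies inside `A` is constant on `A`. In this form the arguments
need no walks and no subtypes: one exhibits a suitable closed predicate. -/
def Cn {V : Type*} (G : SimpleGraph V) (A : Set V) : Prop :=
  A.Nonempty ∧ ∀ P : V → Prop, (∀ x ∈ A, ∀ y ∈ A, G.Adj x y → P x → P y) →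
    ∀ x ∈ A, ∀ y ∈ A, P x → P y

/-- `Tc G A`: the induced subgraph `G[A]` is 2-connected in the sense of `IsTwoConnected`.
For `v ∉ A` the second condition repeats the first. -/
def Tc {V : Type*} (G : SimpleGraph V) (A : Set V) : Prop :=
  Cn G A ∧ ∀ v, Cn G (A \ {v})

section Two
variable {V : Type*} {H H' : SimpleGraph V} {A B S : Set V} {x y : V}

/-- `{x, y}` cuts the nonempty set `B` off from the rest of `A` in `H[A]`: edges of `H[A]` leaving
`B` end in `x` or `y`. The rest `A \ (B ∪ {x, y})` may be empty. -/
structure Sep (H : SimpleGraph V) (A B : Set V) (x y : V) : Prop where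
  ne : x ≠ y
  xA : x ∈ A
  yA : y ∈ A
  xB : x ∉ B
  yB : y ∉ B
  sub : B ⊆ A
  non : B.Nonempty
  cut : ∀ b ∈ B, ∀ a ∈ A, H.Adj b a → a ∈ B ∨ a = x ∨ a = y

/-- What `B` contributes to 2-connectedness when it is attached at `x` and `y` only: `B` is
connected together with either of `x`, `y`, and after deletion of any `v ∈ B` each remaining vertex
of `B` is still linked to `x` or to `y` inside `B ∪ {x, y}`. The third condition is stated with
closed predicates, as in `Cn`. -/
structure Link (H : SimpleGraph V) (B : Set V) (x y : V) : Prop where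
  fst : Cn H (insert x B)
  snd : Cn H (insert y B)
  del : ∀ v ∈ B, ∀ P : V → Prop,
    (∀ a ∈ insert x (insert y B) \ {v}, ∀ b ∈ insert x (insert y B) \ {v},
      H.Adj a b → P a → P b) → ∀ b ∈ B \ {v}, P b → P x ∨ P y

theorem Cn.congr (h : Cn H A) (hH : ∀ a ∈ A, ∀ b ∈ A, H.Adj a b → H'.Adj a b) : Cn H' A :=
  ⟨h.1, fun P hP => h.2 P fun a ha b hb hab => hP a ha b hb (hH a ha b hb hab)⟩

theorem Tc.congr (h : Tc H A) (hH : ∀ a ∈ A, ∀ b ∈ A, H.Adj a b → H'.Adj a b) : Tc H' A :=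
  ⟨h.1.congr hH, fun v => (h.2 v).congr fun a ha b hb => hH a ha.1 b hb.1⟩

theorem Sep.swap (h : Sep H A B x y) : Sep H A B y x :=
  ⟨h.ne.symm, h.yA, h.xA, h.yB, h.xB, h.sub, h.non, fun b hb a ha hab =>
    (h.cut b hb a ha hab).imp_right Or.symm⟩

theorem Sep.cn_insert (h : Sep H A B x y) (hT : Tc H A) : Cn H (insert x B) := by
  classical
  refine ⟨⟨x, by simp⟩, fun P hP => ?_⟩
  have := (hT.2 y).2 (fun z => if z ∈ insert x B then P z else P x) ?_
  · intro a ha b hb hab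
    have h1 := h.ne; have h2 := h.yB; have h3 := h.sub; have h4 := h.xA
    have := this a (by grind) b (by grind)
    grind
  · intro a ha b hb hab hp
    have h1 := h.cut a
    have h2 := h.cut b
    have h3 := hab.symm
    grind

/-- In a 2-connected graph, each part cut off by a 2-separation is well attached. -/
theorem Sep.link (h : Sep H A B x y) (hT : Tc H A) : Link H B x y := by
  refine ⟨h.cn_insert hT, h.swap.cn_insert hT, fun v hv P hP b hb hPb => ?_⟩
  by_contra hn
  have hx : x ∈ A \ {v} := ⟨h.xA, fun hh => h.xB (by grind)⟩
  have := (hT.2 v).2 (fun z => z ∈ B ∧ P z) ?_ b ⟨h.sub hb.1, hb.2⟩ x hx ⟨hb.1, hPb⟩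
  · exact h.xB this.1
  · intro a ha c hc hac hp
    have := h.cut a hp.1 c hc.1 hac
    grind

/-- Replacing `B` by an edge `xy` preserves connectedness, also after deletion of a set `R` not
containing both `x` and `y`. The closed predicate `P` on `A \ B` is extended to `B` by its value at an
end `p ∉ R`. -/
theorem Sep.cn_reduce (h : Sep H A B x y) {R : Set V} (hR : ¬ (x ∈ R ∧ y ∈ R))
    (hC : Cn H (A \ R)) : Cn (H ⊔ edge x y) ((A \ B) \ R) := by
  classical
  obtain ⟨p, hp, hpR⟩ : ∃ p, (p = x ∨ p = y) ∧ p ∉ R := by grind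
  have hpA : p ∈ A := by rcases hp with rfl | rfl; exacts [h.xA, h.yA]
  have hpB : p ∉ B := by rcases hp with rfl | rfl; exacts [h.xB, h.yB]
  refine ⟨⟨p, ⟨hpA, hpB⟩, hpR⟩, fun P hP => ?_⟩
  have hxy : (H ⊔ edge x y).Adj x y := by simp [edge_adj, h.ne]
  have hle : ∀ a b, H.Adj a b → (H ⊔ edge x y).Adj a b := fun a b hab => Or.inl hab
  have key := hC.2 (fun z => if z ∈ B then P p else P z) ?_
  · intro a ha b hb hab
    have := key a ⟨ha.1.1, ha.2⟩ b ⟨hb.1.1, hb.2⟩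
    grind
  · intro a ha b hb hab hq
    have h1 := h.cut a
    have h2 := h.cut b
    have h3 := hab.symm
    have e1 : x ∉ R → y ∉ R → (P x ↔ P y) := fun hx hy =>
      ⟨hP x ⟨⟨h.xA, h.xB⟩, hx⟩ y ⟨⟨h.yA, h.yB⟩, hy⟩ hxy,
       hP y ⟨⟨h.yA, h.yB⟩, hy⟩ x ⟨⟨h.xA, h.xB⟩, hx⟩ hxy.symm⟩
    have := hle a b hab
    have h4 := hP a
    have h5 := h.xB; have h6 := h.yB
    grind

/-- Replacing `B` by the edge `xy` preserves 2-connectedness. -/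
theorem Sep.tc_reduce (h : Sep H A B x y) (hT : Tc H A) : Tc (H ⊔ edge x y) (A \ B) := by
  constructor
  · simpa using h.cn_reduce (R := ∅) (by simp) (by simpa using hT.1)
  · intro v
    by_cases hv : v ∈ B
    · have := h.cn_reduce (R := ∅) (by simp) (by simpa using hT.1)
      rwa [Set.sdiff_singleton_eq_self (by grind), ← Set.sdiff_empty (s := A \ B)]
    · exact h.cn_reduce (R := {v}) (by have := h.ne; grind) (hT.2 v)

theorem Link.swap (h : Link H B x y) : Link H B y x :=
  ⟨h.snd, h.fst, fun v hv P hP b hb hPb => (h.del v hv P (by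
    rw [Set.insert_comm]; exact hP) b hb hPb).symm⟩

theorem Link.del' (h : Link H B x y) (v) (hv : v ∈ B) (P : V → Prop)
    (hP : ∀ a ∈ insert x (insert y B) \ {v}, ∀ b ∈ insert x (insert y B) \ {v},
      H.Adj a b → P a → P b) (b) (hb : b ∈ B \ {v}) (hPb : P x ∧ P y) : P b := by
  by_contra hn
  have := h.del v hv (fun z => ¬ P z) (fun a ha b hb hab hna hPb => hna (hP b hb a ha hab.symm hPb))
    b hb hn
  grind

theorem Link.closed (h : Link H B x y) (hB : B.Nonempty) (P : V → Prop)
    (hP : ∀ a ∈ insert x (insert y B), ∀ b ∈ insert x (insert y B), H.Adj a b → P a → P b) :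
    (P x ↔ P y) ∧ ∀ b ∈ B, (P b ↔ P x) := by
  have h1 := h.fst.2 P (fun a ha b hb => hP a (by grind) b (by grind))
  have h2 := h.snd.2 P (fun a ha b hb => hP a (by grind) b (by grind))
  obtain ⟨b, hb⟩ := hB
  have a1 := h1 x (by grind) b (by grind)
  have a2 := h1 b (by grind) x (by grind)
  have a3 := h2 y (by grind) b (by grind)
  have a4 := h2 b (by grind) y (by grind)
  refine ⟨by grind, fun c hc => ?_⟩
  have a1 := h1 x (by grind) c (by grind)
  have a2 := h1 c (by grind) x (by grind)
  grind

/-- Replacing the edge `xy` by `B` preserves connectedness of the graph with `x` deleted. -/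
theorem Link.cn_x (h : Link H B x y) (hxy : x ≠ y) (hyB : y ∉ B) (hxB : x ∉ B)
    (hy : y ∈ S) (hS : Cn (H ⊔ edge x y) (S \ {x})) : Cn H ((S ∪ B) \ {x}) := by
  have hS' : Cn H (S \ {x}) := hS.congr (by
    intro a ha b hb hab
    simp [edge_adj] at hab
    grind)
  refine ⟨⟨y, by grind⟩, fun P hP => ?_⟩
  have h1 := hS'.2 P (fun a ha b hb => hP a (by grind) b (by grind))
  have h2 := h.snd.2 P (fun a ha b hb => hP a (by grind) b (by grind))
  intro a ha b hb hab
  have : P y := by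
    rcases ha with ⟨ha | ha, hax⟩
    · exact h1 a ⟨ha, hax⟩ y (by grind) hab
    · exact h2 a (by grind) y (by grind) hab
  rcases hb with ⟨hb | hb, hbx⟩
  · exact h1 y (by grind) b ⟨hb, hbx⟩ this
  · exact h2 y (by grind) b (by grind) this

/-- Replacing the edge `xy` by `B` preserves connectedness. -/
theorem Link.cn_glue (h : Link H B x y) (hB : B.Nonempty)
    (hx : x ∈ S) (hy : y ∈ S)
    (hS : Cn (H ⊔ edge x y) S) : Cn H (S ∪ B) := by
  refine ⟨⟨x, by grind⟩, fun P hP => ?_⟩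
  have h0 := h.closed hB P (fun a ha b hb => hP a (by grind) b (by grind))
  have h1 := hS.2 P (fun a ha b hb hab => by
    simp only [sup_adj, edge_adj] at hab
    have := hP a (by grind) b (by grind)
    grind)
  intro a ha b hb hab
  have : P x := by
    rcases ha with ha | ha
    · exact h1 a ha x hx hab
    · grind
  rcases hb with hb | hb
  · exact h1 x hx b hb this
  · grind

/-- Replacing the edge `xy` by a well attached `B` preserves 2-connectedness, provided there is
a further vertex `z`. This vertex keeps `x` and `y` connected to each other when a vertex of `B` is
deleted. -/
theorem Link.tc_glue (h : Link H B x y) (hB : B.Nonempty) (hxy : x ≠ y)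
    (hxB : x ∉ B) (hyB : y ∉ B) (hx : x ∈ S) (hy : y ∈ S) (hSB : Disjoint S B)
    (hz : ∃ z ∈ S, z ≠ x ∧ z ≠ y)
    (hS : Tc (H ⊔ edge x y) S) : Tc H (S ∪ B) := by
  refine ⟨h.cn_glue hB hx hy hS.1, fun v => ?_⟩
  by_cases hvx : v = x
  · subst hvx; exact h.cn_x hxy hyB hxB hy (hS.2 _)
  by_cases hvy : v = y
  · subst hvy
    exact h.swap.cn_x hxy.symm hxB hyB hx (by rw [edge_comm]; exact hS.2 _)
  by_cases hvB : v ∈ B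
  · refine ⟨⟨x, by grind⟩, fun P hP => ?_⟩
    obtain ⟨z, hzS, hzx, hzy⟩ := hz
    have hvS : v ∉ S := fun hh => Set.disjoint_left.1 hSB hh hvB
    have g1 := (hS.2 x).2 P (fun a ha b hb hab => by
      simp only [sup_adj, edge_adj] at hab
      have := hP a (by grind) b (by grind)
      grind)
    have g2 := (hS.2 y).2 P (fun a ha b hb hab => by
      simp only [sup_adj, edge_adj] at hab
      have := hP a (by grind) b (by grind)
      grind)
    have k1 := h.del v hvB P (fun a ha b hb => hP a (by grind) b (by grind))
    have k2 := h.del' v hvB P (fun a ha b hb => hP a (by grind) b (by grind))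
    have hzc : ∀ a ∈ S, (P a ↔ P z) := by
      intro a ha
      by_cases hax : a = x
      · exact ⟨g2 a (by grind) z (by grind), g2 z (by grind) a (by grind)⟩
      · exact ⟨g1 a (by grind) z (by grind), g1 z (by grind) a (by grind)⟩
    have hxz := hzc x hx
    have hyz := hzc y hy
    have hall : ∀ a ∈ (S ∪ B) \ {v}, (P a ↔ P z) := by
      rintro a ⟨ha | ha, hav⟩
      · exact hzc a ha
      · have := k1 a ⟨ha, hav⟩
        have := k2 a ⟨ha, hav⟩
        grind
    intro a ha b hb hab
    exact (hall b hb).2 ((hall a ha).1 hab)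
  · have := h.cn_glue (S := S \ {v}) hB (by grind) (by grind) (hS.2 v)
    convert this using 1
    grind

/-- Attaching `B` to a connected set containing at least one of `x`, `y` (and using the edge `xy` if
both) gives a connected set. Applied with `C` the complement of a flat. -/
theorem Link.cn_out {C : Set V} (h : Link H B x y) (hB : B.Nonempty) (hC : x ∈ C ∨ y ∈ C)
    (hS : Cn (H ⊔ edge x y) C) : Cn H (C ∪ B) := by
  by_cases hx : x ∈ C
  · by_cases hy : y ∈ C
    · exact h.cn_glue hB hx hy hS
    · refine ⟨⟨x, by grind⟩, fun P hP => ?_⟩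
      have h2 := h.fst.2 P (fun a ha b hb => hP a (by grind) b (by grind))
      have h1 := hS.2 P (fun a ha b hb hab => by
        simp only [sup_adj, edge_adj] at hab
        have := hP a (by grind) b (by grind)
        grind)
      have hall : ∀ a ∈ C ∪ B, (P a ↔ P x) := by
        rintro a (ha | ha)
        · exact ⟨h1 a ha x hx, h1 x hx a ha⟩
        · exact ⟨h2 a (by grind) x (by grind), h2 x (by grind) a (by grind)⟩
      intro a ha b hb hab
      exact (hall b hb).2 ((hall a ha).1 hab)
  · have hy : y ∈ C := by grind
    refine ⟨⟨y, by grind⟩, fun P hP => ?_⟩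
    have h2 := h.snd.2 P (fun a ha b hb => hP a (by grind) b (by grind))
    have h1 := hS.2 P (fun a ha b hb hab => by
      simp only [sup_adj, edge_adj] at hab
      have := hP a (by grind) b (by grind)
      grind)
    have hall : ∀ a ∈ C ∪ B, (P a ↔ P y) := by
      rintro a (ha | ha)
      · exact ⟨h1 a ha y hy, h1 y hy a ha⟩
      · exact ⟨h2 a (by grind) y (by grind), h2 y (by grind) a (by grind)⟩
    intro a ha b hb hab
    exact (hall b hb).2 ((hall a ha).1 hab)

/-- If `S` does not contain both `x` and `y`, connectedness of the complement of `S` passes from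
the reduced graph to the original one. -/
theorem Sep.flat_out (h : Sep H A B x y) (hL : Link H B x y)
    (hS : S ⊆ A \ B) (hxyS : ¬ (x ∈ S ∧ y ∈ S))
    (hC : Cn (H ⊔ edge x y) ((A \ B) \ S)) : Cn H (A \ S) := by
  have := hL.cn_out h.non (C := (A \ B) \ S) (by
    have := h.xA; have := h.yA; have := h.xB; have := h.yB
    grind) hC
  convert this using 1
  have := h.sub
  grind

theorem Tc.out (hxyS : ¬ (x ∈ S ∧ y ∈ S)) (hC : Tc (H ⊔ edge x y) S) : Tc H S :=
  hC.congr fun a ha b hb hab => by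
    simp only [sup_adj, edge_adj] at hab
    grind

/-- A flat of the reduced graph containing `x`, `y` and a further vertex gives the flat `S ∪ B` of
the original graph. -/
theorem Sep.flat_in (h : Sep H A B x y) (hL : Link H B x y)
    (hS : S ⊆ A \ B) (hx : x ∈ S) (hy : y ∈ S) (hz : ∃ z ∈ S, z ≠ x ∧ z ≠ y)
    (hT : Tc (H ⊔ edge x y) S)
    (hC : Cn (H ⊔ edge x y) ((A \ B) \ S)) : Tc H (S ∪ B) ∧ Cn H (A \ (S ∪ B)) := by
  refine ⟨hL.tc_glue h.non h.ne h.xB h.yB hx hy (Set.disjoint_left.2 fun a ha => (hS ha).2) hz hT,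
    ?_⟩
  have : Cn H ((A \ B) \ S) := hC.congr fun a ha b hb hab => by
    simp only [sup_adj, edge_adj] at hab
    grind
  convert this using 1
  grind

end Two

/-! ### Weights, flats, and edges that are both deletable and contractible -/

section Sums
variable {V : Type*} [Fintype V] {H : SimpleGraph V} {A B S : Set V} {x y : V}

open scoped Classical in
/-- The sum of `q` over ordered pairs in `S`. For a symmetric weight on edges this is twice
`w(E(S))`; hence the factors `2` in the equations below. -/
noncomputable def dsum (q : V → V → ℚ) (S : Set V) : ℚ :=
  ∑ a, ∑ b, if a ∈ S ∧ b ∈ S then q a b else 0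

open scoped Classical in
/-- The weight `q` with `t` added on the pair `xy` (in both orders). -/
noncomputable def bump (q : V → V → ℚ) (x y : V) (t : ℚ) (a b : V) : ℚ :=
  q a b + if s(a, b) = s(x, y) then t else 0

/-- If no weight runs between `B` and `S` except at `x` and `y`, then passing from `S` to `S ∪ B`
adds an amount independent of `S`. -/
theorem dsum_glue {q : V → V → ℚ} (hSB : Disjoint S B) (hx : x ∈ S) (hy : y ∈ S)
    (hq : ∀ a ∈ S, ∀ b ∈ B, a ≠ x → a ≠ y → q a b = 0 ∧ q b a = 0) :
    dsum q (S ∪ B) = dsum q S + (dsum q (insert x (insert y B)) - dsum q {x, y}) := by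
  classical
  unfold dsum
  simp only [← Finset.sum_add_distrib, ← Finset.sum_sub_distrib]
  refine Finset.sum_congr rfl fun a _ => Finset.sum_congr rfl fun b _ => ?_
  have h1 := hq a
  have h2 := hq b
  have h3 : a ∈ S → a ∉ B := fun h => Set.disjoint_left.1 hSB h
  have h4 : b ∈ S → b ∉ B := fun h => Set.disjoint_left.1 hSB h
  simp only [Set.mem_union, Set.mem_insert_iff, Set.mem_singleton_iff]
  by_cases aB : a ∈ B <;> by_cases bB : b ∈ B
  · grind
  · grind
  · grind
  · grind

theorem dsum_bump {q : V → V → ℚ} (t : ℚ) :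
    dsum (bump q x y t) S = dsum q S + dsum (bump 0 x y t) S := by
  classical
  unfold dsum bump
  simp only [← Finset.sum_add_distrib]
  refine Finset.sum_congr rfl fun a _ => Finset.sum_congr rfl fun b _ => ?_
  split_ifs <;> simp

theorem dsum_bump_of_mem {q : V → V → ℚ} (hxy : x ≠ y) (t : ℚ) (hx : x ∈ S) (hy : y ∈ S) :
    dsum (bump q x y t) S = dsum q S + 2 * t := by
  classical
  rw [dsum_bump]
  congr 1
  unfold dsum bump
  have : ∀ a b : V, (if a ∈ S ∧ b ∈ S then (0 : V → V → ℚ) a b +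
      (if s(a, b) = s(x, y) then t else 0) else 0)
      = (if a = x then if b = y then t else 0 else 0) + 
        (if a = y then if b = x then t else 0 else 0) := by
    intro a b
    simp only [Sym2.eq_iff, Pi.zero_apply]
    grind
  simp only [this, Finset.sum_add_distrib]
  simp
  ring

theorem dsum_bump_of_not_mem {q : V → V → ℚ} (hxy : x ≠ y) (t : ℚ) (h : ¬ (x ∈ S ∧ y ∈ S)) :
    dsum (bump q x y t) S = dsum q S := by
  classical
  unfold dsum bump
  refine Finset.sum_congr rfl fun a _ => Finset.sum_congr rfl fun b _ => ?_
  simp only [Sym2.eq_iff]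
  grind

/-- Each edge inside `A` lies in the stars of exactly two vertices. -/
theorem dsum_stars {q : V → V → ℚ} (hq : ∀ a, q a a = 0) :
    ∑ v ∈ A.toFinite.toFinset, (dsum q A - dsum q (A \ {v})) = 2 * dsum q A := by
  classical
  unfold dsum
  simp only [← Finset.sum_sub_distrib, Finset.mul_sum]
  rw [Finset.sum_comm]
  refine Finset.sum_congr rfl fun a _ => ?_
  rw [Finset.sum_comm]
  refine Finset.sum_congr rfl fun b _ => ?_
  by_cases hab : a ∈ A ∧ b ∈ A
  · by_cases e : a = b
    · subst e; simp [hq]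
    trans ∑ v ∈ A.toFinite.toFinset,
      ((if v = a then q a b else 0) + if v = b then q a b else 0)
    · refine Finset.sum_congr rfl fun v _ => ?_
      simp only [Set.mem_sdiff, Set.mem_singleton_iff]
      grind
    simp only [Finset.sum_add_distrib]
    simp [hab]
    ring
  · rw [if_neg hab, mul_zero]
    refine Finset.sum_eq_zero fun v _ => ?_
    simp only [Set.mem_sdiff, Set.mem_singleton_iff]
    grind

/-- The flat equations `w(E(S)) + 1 = δ(|S| - 1)` in `H[A]`, in doubled form, for the flats `S` with
at least three vertices. Flats that are single edges are left out, so that the weight of an added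
edge `xy` can be chosen freely. -/
def Flats (H : SimpleGraph V) (A : Set V) (q : V → V → ℚ) (δ : ℚ) : Prop :=
  ∀ S ⊆ A, 3 ≤ S.ncard → Tc H S → Cn H (A \ S) → dsum q S + 2 = 2 * δ * (S.ncard - 1)

theorem Sep.dsum_union (h : Sep H A B x y) {q : V → V → ℚ} (hq : ∀ a b, ¬ H.Adj a b → q a b = 0)
    (hS : S ⊆ A \ B) (hx : x ∈ S) (hy : y ∈ S) :
    dsum q (S ∪ B) = dsum q S + (dsum q (insert x (insert y B)) - dsum q {x, y}) := by
  refine dsum_glue (Set.disjoint_left.2 fun a ha => (hS ha).2) hx hy fun a ha b hb h1 h2 => ?_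
  have hn : ¬ H.Adj b a := fun hab => by
    have := h.cut b hb a (hS ha).1 hab
    have := (hS ha).2
    grind
  exact ⟨hq _ _ fun hh => hn hh.symm, hq _ _ hn⟩

/-- The flat equations survive the replacement of `B` by the edge `xy`, if the weight `t` added on
`xy` is chosen so that the edges meeting `B` have weight `t + δ|B|`: a flat containing `x` and `y` is
compared with its union with `B`, any other flat is unchanged. -/
theorem Sep.flats (h : Sep H A B x y) (hT : Tc H A) {q : V → V → ℚ} {δ t : ℚ}
    (hq : ∀ a b, ¬ H.Adj a b → q a b = 0) (hF : Flats H A q δ)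
    (ht : dsum q (insert x (insert y B)) - dsum q {x, y} = 2 * t + 2 * δ * B.ncard) :
    Flats (H ⊔ edge x y) (A \ B) (bump q x y t) δ := by
  intro S hS h3 hTS hC
  have hL := h.link hT
  by_cases hxy : x ∈ S ∧ y ∈ S
  · have hz : ∃ z ∈ S, z ≠ x ∧ z ≠ y := by
      by_contra hn
      push Not at hn
      have : S ⊆ {x, y} := fun a ha => by
        by_cases hax : a = x
        · simp [hax]
        · simp [hn a ha hax]
      have := Set.ncard_le_ncard this
      have := Set.ncard_pair h.ne
      omega
    obtain ⟨h1, h2⟩ := h.flat_in hL hS hxy.1 hxy.2 hz hTS hC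
    have hd : Disjoint S B := Set.disjoint_left.2 fun a ha => (hS ha).2
    have hc : (S ∪ B).ncard = S.ncard + B.ncard := Set.ncard_union_eq hd
    have := hF (S ∪ B) (Set.union_subset (fun a ha => (hS ha).1) h.sub) (by omega) h1 h2
    rw [h.dsum_union hq hS hxy.1 hxy.2, ht, hc] at this
    rw [dsum_bump_of_mem h.ne _ hxy.1 hxy.2]
    push_cast at this
    linarith
  · rw [dsum_bump_of_not_mem h.ne _ hxy]
    exact hF S (fun a ha => (hS ha).1) h3 (hTS.out hxy) (h.flat_out hL hS hxy hC)

/-- The equation for the total weight survives with the same choice of `t` as in `Sep.flats`. -/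
theorem Sep.total (h : Sep H A B x y) {q : V → V → ℚ} {δ t : ℚ}
    (hq : ∀ a b, ¬ H.Adj a b → q a b = 0) (hA : dsum q A = 2 * δ * (A.ncard - 1))
    (ht : dsum q (insert x (insert y B)) - dsum q {x, y} = 2 * t + 2 * δ * B.ncard) :
    dsum (bump q x y t) (A \ B) = 2 * δ * ((A \ B).ncard - 1) := by
  have h1 := h.dsum_union hq subset_rfl ⟨h.xA, h.xB⟩ ⟨h.yA, h.yB⟩
  have hd : Disjoint (A \ B) B := Set.disjoint_left.2 fun a ha => ha.2
  have hc : ((A \ B) ∪ B).ncard = (A \ B).ncard + B.ncard := Set.ncard_union_eq hd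
  rw [Set.sdiff_union_of_subset h.sub] at h1 hc
  rw [dsum_bump_of_mem h.ne t (S := A \ B) ⟨h.xA, h.xB⟩ ⟨h.yA, h.yB⟩]
  rw [hc, h1, ht] at hA
  push_cast at hA
  linarith

/-- For `δ ≥ 3` no edge `uv` is both deletable and contractible. The proof is by induction on
`|A|`. A 2-separation `{x, y}` of `H[A]` differs from `{u, v}`, and the part not meeting `{u, v}` can
be replaced by an edge. If there is no 2-separation, complements of single vertices are flats, so all
stars have weight `δ + 1`, and double counting leaves fewer than four vertices, which is absurd.
The weight `q` is an arbitrary rational weight on the edges, as the reduction may produce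
any value on `xy`. -/
theorem no_both {δ : ℚ} (hδ : 3 ≤ δ) (n : ℕ) : ∀ (H : SimpleGraph V) (A : Set V) (q : V → V → ℚ)
    (u v : V), A.ncard = n → H.Adj u v → u ∈ A → v ∈ A → (∀ a b, ¬ H.Adj a b → q a b = 0) →
    dsum q A = 2 * δ * (A.ncard - 1) → Flats H A q δ → Tc (H \ edge u v) A →
    Cn H (A \ {u, v}) → False := by
  induction n using Nat.strong_induction_on with
  | _ n ih =>
  intro H A q u v hn huv hu hv hq hA hF hT hC
  have hTH : Tc H A := hT.congr fun a _ b _ hab => hab.1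
  -- a triangle `uvz` would be disconnected by deleting the edge `uv` and the vertex `z`
  have h4 : 4 ≤ A.ncard := by
    obtain ⟨z, hzA, hz⟩ := hC.1
    have hz' : ∃ z' ∈ A, z' ≠ z ∧ z' ≠ u ∧ z' ≠ v := by
      by_contra hcon
      push Not at hcon
      refine huv.ne ((hT.2 z).2 (fun a => a = u) ?_ u ?_ v ?_ rfl).symm
      · rintro a ha b hb hab rfl
        have := hcon b hb.1
        simp only [sdiff_adj, edge_adj] at hab
        grind
      · grind
      · grind
    obtain ⟨z', hz'A, h1, h2, h3⟩ := hz'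
    have hsub : ({z', z, u, v} : Set V) ⊆ A := by grind
    have := Set.ncard_le_ncard hsub
    have huv' := huv.ne
    rw [Set.ncard_insert_of_notMem (by grind), Set.ncard_insert_of_notMem (by grind),
      Set.ncard_pair huv'] at this
    omega
  by_cases h3c : ∀ x ∈ A, ∀ y ∈ A, x ≠ y → Cn H (A \ {x, y})
  · have hstar : ∀ v ∈ A, dsum q A - dsum q (A \ {v}) = 2 * δ + 2 := by
      intro v hv
      have hc : (A \ {v}).ncard + 1 = A.ncard := Set.ncard_sdiff_singleton_add_one hv
      have := hF (A \ {v}) Set.sdiff_subset (by omega) ?_ ?_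
      · rw [hA, ← hc]
        push_cast
        linarith
      · refine ⟨hTH.2 v, fun y => ?_⟩
        by_cases hy : y ∈ A ∧ y ≠ v
        · convert h3c v hv y hy.1 hy.2.symm using 1
          grind
        · convert hTH.2 v using 1
          grind
      · refine ⟨⟨v, by grind⟩, fun P _ a ha b hb => ?_⟩
        have : a = b := by grind
        rw [this]; exact id
    have hs := dsum_stars (A := A) (q := q) (fun a => hq a a (H.loopless.irrefl a))
    rw [Finset.sum_congr rfl (fun v hv => hstar v (by simpa using hv)), Finset.sum_const,
      ← Set.ncard_eq_toFinset_card, hA, nsmul_eq_mul] at hs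
    -- `n (δ + 1) = 2 δ (n - 1)` means `(n - 2) (δ - 1) = 2`, impossible for `n ≥ 4` and `δ ≥ 3`
    have : (4 : ℚ) ≤ A.ncard := by exact_mod_cast h4
    nlinarith
  · push Not at h3c
    obtain ⟨x, hx, y, hy, hxy, hnc⟩ := h3c
    obtain ⟨B, hSep, huB, hvB, hrest⟩ : ∃ B, Sep H A B x y ∧ u ∉ B ∧ v ∉ B ∧
        (s(u, v) ≠ s(x, y)) := by
      have hne : s(u, v) ≠ s(x, y) := by
        intro he
        rw [Sym2.eq_iff] at he
        rcases he with ⟨rfl, rfl⟩ | ⟨rfl, rfl⟩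
        · exact hnc hC
        · exact hnc (by rwa [Set.pair_comm])
      have hnon : (A \ {x, y}).Nonempty := by
        rw [ne_eq, Sym2.eq_iff] at hne
        by_cases hux : u = x ∨ u = y
        · exact ⟨v, by grind [huv.ne]⟩
        · exact ⟨u, by grind⟩
      simp only [Cn, hnon, true_and] at hnc
      push Not at hnc
      obtain ⟨P, hP, a, ha, b, hb, hPa, hPb⟩ := hnc
      rw [ne_eq, Sym2.eq_iff] at hne
      have huv' := huv.symm
      have g1 := hP u
      have g2 := hP v
      -- `P` splits `A \ {x, y}` into two unions of components; since `uv` is an edge, one of the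
      -- two parts avoids both `u` and `v`
      by_cases hPuv : (u ∈ A \ {x, y} ∧ P u) ∨ (v ∈ A \ {x, y} ∧ P v)
      · refine ⟨{z ∈ A \ {x, y} | ¬ P z}, ⟨hxy, hx, hy, by simp, by simp, fun z hz => hz.1.1,
          ⟨b, hb, hPb⟩, fun c hc d hd hcd => ?_⟩, ?_, ?_, by rwa [ne_eq, Sym2.eq_iff]⟩
        · have := hP d
          have := hcd.symm
          grind
        · grind
        · grind
      · refine ⟨{z ∈ A \ {x, y} | P z}, ⟨hxy, hx, hy, by simp, by simp, fun z hz => hz.1.1,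
          ⟨a, ha, hPa⟩, fun c hc d hd hcd => ?_⟩, ?_, ?_, by rwa [ne_eq, Sym2.eq_iff]⟩
        · have := hP c
          grind
        · grind
        · grind
    have hc : (A \ B).ncard < n := by
      rw [← hn]
      exact Set.ncard_lt_ncard (by
        refine ⟨Set.sdiff_subset, fun hh => ?_⟩
        obtain ⟨b, hb⟩ := hSep.non
        exact (hh (hSep.sub hb)).2 hb)
    set t := (dsum q (insert x (insert y B)) - dsum q {x, y}) / 2 - δ * B.ncard with ht
    have ht' : dsum q (insert x (insert y B)) - dsum q {x, y} = 2 * t + 2 * δ * B.ncard := by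
      rw [ht]; ring
    refine ih _ hc (H ⊔ edge x y) (A \ B) (bump q x y t) u v rfl (Or.inl huv) ⟨hu, huB⟩ ⟨hv, hvB⟩
      ?_ (hSep.total hq hA ht') (hSep.flats hTH hq hF ht') ?_ ?_
    · intro a b hab
      simp only [sup_adj, edge_adj, not_or] at hab
      unfold bump
      rw [hq a b hab.1, if_neg, add_zero]
      rw [Sym2.eq_iff]
      grind
    · have hSep' : Sep (H \ edge u v) A B x y := ⟨hxy, hx, hy, hSep.xB, hSep.yB, hSep.sub, hSep.non,
        fun b hb a ha hab => hSep.cut b hb a ha hab.1⟩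
      refine (hSep'.tc_reduce hT).congr fun a _ b _ hab => ?_
      simp only [sup_adj, sdiff_adj, edge_adj] at hab ⊢
      rw [ne_eq, Sym2.eq_iff] at hrest
      grind
    · refine hSep.cn_reduce ?_ hC
      rw [ne_eq, Sym2.eq_iff] at hrest
      grind

end Sums

/-! ### Translation of good flats, contractions and weights -/

section Bridge

theorem connected_iff_closed {W : Type*} {G : SimpleGraph W} : G.Connected ↔
    Nonempty W ∧ ∀ P : W → Prop, (∀ x y, G.Adj x y → P x → P y) → ∀ x y, P x → P y := by
  constructor
  · rintro hG
    refine ⟨hG.nonempty, fun P hP x y hx => ?_⟩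
    obtain ⟨p⟩ := hG.preconnected x y
    induction p with
    | nil => exact hx
    | cons h _ ih => exact ih (hP _ _ h hx)
  · rintro ⟨hn, h⟩
    exact ⟨fun x y => h (fun z => G.Reachable x z) (fun a b hab hr => hr.trans hab.reachable) x y
      (Reachable.refl x)⟩

theorem connected_induce_iff {W : Type*} {G : SimpleGraph W} {A : Set W} :
    (G.induce A).Connected ↔ Cn G A := by
  classical
  rw [connected_iff_closed]
  constructor
  · rintro ⟨⟨a⟩, h⟩
    refine ⟨⟨a, a.2⟩, fun P hP x hx y hy => h (fun z => P z) (fun x y hxy => hP x x.2 y y.2 hxy)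
      ⟨x, hx⟩ ⟨y, hy⟩⟩
  · rintro ⟨⟨a, ha⟩, h⟩
    refine ⟨⟨⟨a, ha⟩⟩, fun P hP x y hx => ?_⟩
    have := h (fun z => ∃ hz : z ∈ A, P ⟨z, hz⟩) ?_ x x.2 y y.2 ⟨x.2, hx⟩
    · exact this.2
    · rintro a ha b hb hab ⟨_, hp⟩
      exact ⟨hb, hP ⟨a, ha⟩ ⟨b, hb⟩ hab hp⟩

theorem cn_induce {W : Type*} {G : SimpleGraph W} {A : Set W} {S : Set A} :
    Cn (G.induce A) S ↔ Cn G (Subtype.val '' S) := by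
  constructor
  · rintro ⟨⟨a, ha⟩, h⟩
    refine ⟨⟨a, a, ha, rfl⟩, fun P hP => ?_⟩
    rintro _ ⟨x, hx, rfl⟩ _ ⟨y, hy, rfl⟩
    exact h (fun z => P z) (fun x hx y hy hxy => hP x ⟨x, hx, rfl⟩ y ⟨y, hy, rfl⟩ hxy) x hx y hy
  · rintro ⟨⟨_, a, ha, rfl⟩, h⟩
    refine ⟨⟨a, ha⟩, fun P hP x hx y hy hxP => ?_⟩
    have := h (fun z => ∃ hz : z ∈ A, P ⟨z, hz⟩) ?_ x ⟨x, hx, rfl⟩ y ⟨y, hy, rfl⟩ ⟨x.2, hxP⟩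
    · exact this.2
    · rintro _ ⟨a, ha, rfl⟩ _ ⟨b, hb, rfl⟩ hab ⟨_, hp⟩
      exact ⟨b.2, hP a ha b hb hab hp⟩

theorem cn_univ {W : Type*} {G : SimpleGraph W} : G.Connected ↔ Cn G Set.univ := by
  rw [connected_iff_closed, Cn, ← Set.nonempty_iff_univ_nonempty]
  simp

theorem isTwoConnected_iff {W : Type*} {G : SimpleGraph W} :
    IsTwoConnected G ↔ Tc G Set.univ := by
  unfold IsTwoConnected Tc
  rw [cn_univ]
  refine and_congr_right fun _ => forall_congr' fun v => ?_
  rw [connected_induce_iff]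
  have : {u : W | u ≠ v} = Set.univ \ {v} := by ext; simp
  rw [this]

theorem tc_induce {W : Type*} {G : SimpleGraph W} {A : Set W} {S : Set A} :
    Tc (G.induce A) S ↔ Tc G (Subtype.val '' S) := by
  unfold Tc
  rw [cn_induce]
  refine and_congr_right fun hS => ?_
  constructor
  · intro h v
    by_cases hv : v ∈ A
    · have := cn_induce.1 (h ⟨v, hv⟩)
      convert this using 1
      ext z; simp
    · rwa [Set.sdiff_singleton_eq_self]
      simp [hv]
  · intro h v
    rw [cn_induce]
    convert h v using 1
    ext z; simp

theorem isTwoConnected_induce_iff {W : Type*} {G : SimpleGraph W} {A : Set W} :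
    IsTwoConnected (G.induce A) ↔ Tc G A := by
  rw [isTwoConnected_iff, tc_induce]
  simp

theorem mk_eq_of_notMem {W : Type*} {F : Set (Sym2 W)} {S : Set W} (hF : ∀ e ∈ F, ∀ v ∈ e, v ∈ S)
    {a b : W} (ha : a ∉ S) (h : (fromEdgeSet F).connectedComponentMk a =
      (fromEdgeSet F).connectedComponentMk b) : a = b := by
  obtain ⟨p⟩ := ConnectedComponent.exact h
  cases p with
  | nil => rfl
  | cons hab _ => exact absurd (hF _ ((fromEdgeSet_adj F).1 hab).1 a (Sym2.mem_mk_left _ _)) ha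

/-- If `F` connects a nonempty set `S` and lies inside it, then contracting `F` shrinks `S` to one
vertex. Contraction preserves connectedness, and deletion of a vertex outside `S` corresponds to the
same deletion in `G`; so only the deletion of the shrunk vertex matters. -/
theorem contract_iff {W : Type*} {G : SimpleGraph W} (hG : IsTwoConnected G) {F : Set (Sym2 W)}
    {S : Set W} (hF : ∀ e ∈ F, ∀ v ∈ e, v ∈ S) (hS : S.Nonempty)
    (hSF : ∀ a ∈ S, ∀ b ∈ S, (fromEdgeSet F).connectedComponentMk a =
      (fromEdgeSet F).connectedComponentMk b) :
    IsTwoConnected (contractEdges G F) ↔ Cn G Sᶜ := by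
  classical
  rw [isTwoConnected_iff] at hG ⊢
  have hadj : ∀ c d, (contractEdges G F).Adj c d ↔ c ≠ d ∧ ∃ u v : W, G.Adj u v ∧
    (SimpleGraph.fromEdgeSet F).connectedComponentMk u = c ∧
    (SimpleGraph.fromEdgeSet F).connectedComponentMk v = d := by
    intro c d
    unfold contractEdges
    rw [fromRel_adj]
    refine and_congr_right fun _ => ⟨?_, Or.inl⟩
    rintro (h | ⟨u, v, h, h1, h2⟩)
    · exact h
    · exact ⟨v, u, h.symm, h2, h1⟩
  have hout : ∀ a b, a ∉ S → (fromEdgeSet F).connectedComponentMk a =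
      (fromEdgeSet F).connectedComponentMk b → a = b := fun a b ha h => mk_eq_of_notMem hF ha h
  generalize hm : (fromEdgeSet F).connectedComponentMk = m at *
  have hsurj : ∀ d, ∃ a, m a = d := fun d => by
    subst hm
    exact d.exists_rep
  obtain ⟨s, hs⟩ := hS
  constructor
  · intro hT
    have h := hT.2 (m s)
    refine ⟨?_, fun P hP x hx y hy hPx => ?_⟩
    · obtain ⟨d, -, hd⟩ := h.1
      obtain ⟨a, rfl⟩ := hsurj d
      exact ⟨a, fun ha => hd (hSF a ha s hs)⟩
    · have hne : ∀ a ∉ S, m a ∈ Set.univ \ {m s} := fun a ha =>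
        ⟨trivial, fun hh => ha (by rw [hout a s ha hh]; exact hs)⟩
      have key : ∀ c ∈ Set.univ \ {m s}, ∀ d ∈ Set.univ \ {m s}, (contractEdges G F).Adj c d →
          (∃ a, a ∉ S ∧ m a = c ∧ P a) → ∃ a, a ∉ S ∧ m a = d ∧ P a := by
        rintro c hc d hd hcd ⟨a, ha, rfl, hPa⟩
        obtain ⟨-, u, v, huv, h1, rfl⟩ := (hadj _ _).1 hcd
        have := hout a u ha h1.symm
        subst this
        have hv : v ∉ S := fun hv => hd.2 (hSF v hv s hs)
        exact ⟨v, hv, rfl, hP a ha v hv huv hPa⟩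
      obtain ⟨a, ha, hay, hPa⟩ := h.2 (fun d => ∃ a, a ∉ S ∧ m a = d ∧ P a) key (m x) (hne x hx)
        (m y) (hne y hy) ⟨x, hx, rfl, hPx⟩
      rwa [← hout a y ha hay]
  · intro hC
    have gen : ∀ (A : Set W) (E : Set (fromEdgeSet F).ConnectedComponent), Cn G A →
        (∀ a ∈ A, m a ∈ E) → (∀ d ∈ E, ∃ a ∈ A, m a = d) → Cn (contractEdges G F) E := by
      intro A E hA h1 h2
      obtain ⟨a, ha⟩ := hA.1
      refine ⟨⟨m a, h1 a ha⟩, fun P hP c hc d hd hPc => ?_⟩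
      obtain ⟨a, ha, rfl⟩ := h2 c hc
      obtain ⟨b, hb, rfl⟩ := h2 d hd
      refine hA.2 (fun z => P (m z)) (fun x hx y hy hxy hPx => ?_) a ha b hb hPc
      by_cases he : m x = m y
      · rwa [← he]
      · exact hP _ (h1 x hx) _ (h1 y hy) ((hadj _ _).2 ⟨he, x, y, hxy, rfl, rfl⟩) hPx
    refine ⟨gen _ _ hG.1 (fun _ _ => trivial) (fun d _ => by simpa using hsurj d), fun d => ?_⟩
    obtain ⟨x, rfl⟩ := hsurj d
    by_cases hx : x ∈ S
    · refine gen _ _ hC (fun a ha => ⟨trivial, fun hh => ?_⟩) (fun d hd => ?_)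
      · exact ha (by rw [hout a x ha hh]; exact hx)
      · obtain ⟨a, rfl⟩ := hsurj d
        exact ⟨a, fun ha => hd.2 (hSF a ha x hx), rfl⟩
    · refine gen _ _ (hG.2 x) (fun a ha => ⟨trivial, fun hh => ?_⟩) (fun d hd => ?_)
      · exact ha.2 (hout x a hx (Eq.symm hh)).symm
      · obtain ⟨a, rfl⟩ := hsurj d
        exact ⟨a, ⟨trivial, fun hh => hd.2 (by rw [Set.mem_singleton_iff.1 hh]; rfl)⟩, rfl⟩

/-- In a 2-connected graph the good flats are the sets inducing a 2-connected subgraph whose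
complement induces a connected one. -/
theorem isGoodFlat_iff {W : Type*} {G : SimpleGraph W} (hG : IsTwoConnected G) {S : Set W} :
    IsGoodFlat G S ↔ Tc G S ∧ Cn G Sᶜ := by
  unfold IsGoodFlat
  rw [isTwoConnected_induce_iff]
  refine and_congr_right fun hT => contract_iff hG (fun e he v hv => he.2 v hv) hT.1.1 ?_
  intro a ha b hb
  refine hT.1.2 (fun z => (fromEdgeSet (edgesIn G S)).connectedComponentMk a =
    (fromEdgeSet (edgesIn G S)).connectedComponentMk z) ?_ a ha b hb rfl
  intro x hx y hy hxy hax
  refine hax.trans (ConnectedComponent.sound (Adj.reachable ?_))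
  rw [fromEdgeSet_adj]
  refine ⟨⟨hxy, ?_⟩, hxy.ne⟩
  simp [hx, hy]

theorem contract_edge_iff {W : Type*} {G : SimpleGraph W} (hG : IsTwoConnected G) {u v : W}
    (huv : u ≠ v) : IsTwoConnected (contractEdges G {s(u, v)}) ↔ Cn G {u, v}ᶜ := by
  have h : (fromEdgeSet {s(u, v)}).connectedComponentMk u =
      (fromEdgeSet {s(u, v)}).connectedComponentMk v :=
    ConnectedComponent.sound (Adj.reachable (by simp [huv]))
  refine contract_iff hG ?_ ⟨u, by simp⟩ ?_
  · rintro e rfl z hz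
    simpa using hz
  · rintro a (rfl | rfl) b (rfl | rfl)
    exacts [rfl, h, h.symm, rfl]

open scoped Classical in
/-- The edge weight `w` as a rational function on ordered pairs, zero on non-edges. -/
noncomputable def wt {V : Type*} (G : SimpleGraph V) (w : Sym2 V → ℕ) (a b : V) : ℚ :=
  if G.Adj a b then (w s(a, b) : ℚ) else 0

theorem dsum_wt {V : Type*} [Fintype V] (G : SimpleGraph V) (w : Sym2 V → ℕ) (S : Set V) :
    dsum (wt G w) S = 2 * ((∑ᶠ e ∈ edgesIn G S, w e : ℕ) : ℚ) := by
  classical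
  have hfin : (edgesIn G S).Finite := Set.toFinite _
  rw [finsum_mem_eq_finite_toFinset_sum _ hfin]
  have h1 : dsum (wt G w) S = ∑ p : V × V with s(p.1, p.2) ∈ hfin.toFinset,
      (w s(p.1, p.2) : ℚ) := by
    unfold dsum wt
    rw [Finset.sum_filter, Fintype.sum_prod_type]
    refine Finset.sum_congr rfl fun a _ => Finset.sum_congr rfl fun b _ => ?_
    simp only [edgesIn, Set.Finite.mem_toFinset, Set.mem_sep_iff, mem_edgeSet, Sym2.mem_iff,
      forall_eq_or_imp, forall_eq]
    split_ifs <;> grind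
  rw [h1, ← Finset.sum_fiberwise_of_maps_to (t := hfin.toFinset) (g := fun p : V × V => s(p.1, p.2))
    (fun p hp => (Finset.mem_filter.1 hp).2)]
  push_cast
  rw [Finset.mul_sum]
  refine Finset.sum_congr rfl fun e he => ?_
  induction e using Sym2.ind with
  | _ a b =>
  have hab : a ≠ b := by
    have : s(a, b) ∈ edgesIn G S := by simpa using he
    exact G.ne_of_adj this.1
  have : (Finset.univ.filter fun p : V × V => s(p.1, p.2) ∈ hfin.toFinset).filter
      (fun p => s(p.1, p.2) = s(a, b)) = {(a, b), (b, a)} := by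
    ext ⟨c, d⟩
    simp only [Finset.mem_filter, Finset.mem_univ, true_and, Finset.mem_insert,
      Finset.mem_singleton, Prod.mk.injEq]
    constructor
    · rintro ⟨_, h⟩; simpa using h
    · intro h
      have : s(c, d) = s(a, b) := by simpa using h
      rw [this]; exact ⟨he, rfl⟩
  rw [this, Finset.sum_pair (by simp [hab])]
  rw [Sym2.eq_swap (a := b)]
  ring

theorem dsum_wt_univ {V : Type*} [Fintype V] (G : SimpleGraph V) (w : Sym2 V → ℕ) :
    dsum (wt G w) Set.univ = 2 * ((∑ᶠ e ∈ G.edgeSet, w e : ℕ) : ℚ) := by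
  rw [dsum_wt]
  have : edgesIn G Set.univ = G.edgeSet := by simp [edgesIn]
  rw [this]

theorem dsum_subtype {V : Type*} [Fintype V] (A : Set V) [Fintype A] (q : V → V → ℚ) (S : Set A) :
    dsum (fun a b : A => q a b) S = dsum q (Subtype.val '' S) := by
  classical
  unfold dsum
  have hs : ∀ f : V → ℚ, (∀ a ∉ A, f a = 0) → ∑ a : A, f a = ∑ a, f a := by
    intro f hf
    rw [← Finset.sum_subset A.toFinset.subset_univ (fun a _ ha => hf a (by simpa using ha))]
    exact (Finset.sum_subtype A.toFinset (fun _ => Set.mem_toFinset) f).symm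
  rw [← hs]
  · refine Finset.sum_congr rfl fun a _ => ?_
    rw [← hs]
    · refine Finset.sum_congr rfl fun b _ => ?_
      simp
    · intro b hb
      rw [if_neg]; rintro ⟨-, ⟨z, -, rfl⟩⟩; exact hb z.2
  · intro a ha
    refine Finset.sum_eq_zero fun b _ => ?_
    rw [if_neg]; rintro ⟨⟨z, -, rfl⟩, -⟩; exact ha z.2

end Bridge

/-! ### One side of the edge `uv` -/

section Sides
variable {V : Type*} {G : SimpleGraph V} {w : Sym2 V → ℕ} {δ : ℕ} {u v : V} {C : Set V}

theorem wt_eq_zero (a b : V) (h : ¬ G.Adj a b) : wt G w a b = 0 := by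
  simp [wt, h]

/-- An edge of weight `1 ≠ δ - 1` is not contractible, so its ends separate the graph. -/
theorem SatisfiesSpade.not_cn (hsp : SatisfiesSpade G δ w) (hδ : 2 < δ) (huv : G.Adj u v)
    (hw1 : w s(u, v) = 1) : ¬ Cn G {u, v}ᶜ := fun h => by
  have := hsp.2.1.2.2 s(u, v) huv ((contract_edge_iff hsp.1 huv.ne).2 h)
  omega

theorem sup_edge_of_adj (huv : G.Adj u v) : G ⊔ edge u v = G := by
  ext a b
  simp only [sup_adj, edge_adj]
  have := huv.symm
  grind

/-- `C` is a connected component of `G ∖ {u, v}`: it is connected, avoids `u` and `v`, and is closed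
under neighbours other than `u` and `v`. -/
structure Side (G : SimpleGraph V) (C : Set V) (u v : V) : Prop where
  uC : u ∉ C
  vC : v ∉ C
  cn : Cn G C
  cut : ∀ b ∈ C, ∀ a, G.Adj b a → a ∈ C ∨ a = u ∨ a = v

theorem Side.sep (h : Side G C u v) (huv : u ≠ v) : Sep G Set.univ C u v :=
  ⟨huv, trivial, trivial, h.uC, h.vC, Set.subset_univ _, h.cn.1, fun b hb a _ hab =>
    h.cut b hb a hab⟩

/-- `{u, v}` also cuts off the union of the other components, which is nonempty because
`G ∖ {u, v}` is disconnected. -/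
theorem Side.sep' (h : Side G C u v) (huv : u ≠ v) (hn : ¬ Cn G {u, v}ᶜ) :
    Sep G Set.univ ({u, v} ∪ C)ᶜ u v := by
  refine ⟨huv, trivial, trivial, by simp, by simp, Set.subset_univ _, ?_, fun b hb a _ hab => ?_⟩
  · by_contra he
    rw [Set.not_nonempty_iff_eq_empty, Set.compl_empty_iff] at he
    refine hn ?_
    convert h.cn using 1
    have := h.uC
    have := h.vC
    ext z
    have : z ∈ {u, v} ∪ C := he ▸ trivial
    grind
  · have := h.cut a
    have := hab.symm
    grind

/-- Raising the weight of `uv` from `1` to `δ - 1` adds `δ - 2`. -/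
theorem wt_update (hδ : 2 < δ) (huv : G.Adj u v) (hw1 : w s(u, v) = 1) [DecidableEq (Sym2 V)] :
    wt G (Function.update w s(u, v) (δ - 1)) = bump (wt G w) u v (δ - 2) := by
  funext a b
  unfold wt bump
  by_cases h : s(a, b) = s(u, v)
  · have hab : G.Adj a b := by rw [← mem_edgeSet, h]; exact huv
    have : ((δ - 1 : ℕ) : ℚ) = δ - 1 := by push_cast [show 1 ≤ δ by omega]; ring
    simp only [hab, h, hw1, Function.update_self, if_true, this]
    push_cast
    ring
  · simp [h]

variable [Fintype V]

theorem SatisfiesSpade.total (hsp : SatisfiesSpade G δ w) :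
    dsum (wt G w) Set.univ = 2 * δ * ((Set.univ : Set V).ncard - 1) := by
  have hn : Nonempty V := hsp.1.1.nonempty
  have : 1 ≤ Nat.card V := Nat.card_pos
  rw [dsum_wt_univ, hsp.2.2.1, Set.ncard_univ]
  push_cast [this]
  ring

theorem SatisfiesSpade.flat (hsp : SatisfiesSpade G δ w) {S : Set V} (hS : Tc G S)
    (hC : Cn G Sᶜ) : dsum (wt G w) S + 2 = 2 * δ * (S.ncard - 1) := by
  have h := hsp.2.2.2 S ((isGoodFlat_iff hsp.1).2 ⟨hS, hC⟩)
  have : 1 ≤ S.ncard := (Set.ncard_pos).2 hS.1.1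
  rw [dsum_wt]
  have h' : ((∑ᶠ e ∈ edgesIn G S, w e : ℕ) : ℚ) + 1 = δ * (S.ncard - 1) := by
    have := congrArg (Nat.cast : ℕ → ℚ) h
    push_cast [‹1 ≤ S.ncard›] at this
    simpa using this
  linarith

/-- The complement of a component of `G ∖ {u, v}` is a good flat: it is the graph obtained by
replacing the component by the edge `uv`, which is present already. -/
theorem Side.star (h : Side G C u v) (hsp : SatisfiesSpade G δ w) (huv : G.Adj u v) :
    dsum (wt G w) Cᶜ + 2 = 2 * δ * (Cᶜ.ncard - 1) := by
  refine hsp.flat ?_ (by rw [compl_compl]; exact h.cn)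
  have := (h.sep huv.ne).tc_reduce (isTwoConnected_iff.1 hsp.1)
  rwa [sup_edge_of_adj huv, ← Set.compl_eq_univ_sdiff] at this

theorem dsum_pair (huv : G.Adj u v) (hw1 : w s(u, v) = 1) : dsum (wt G w) {u, v} = 2 := by
  have h := dsum_bump_of_mem (q := fun _ _ => 0) (S := {u, v}) huv.ne 1 (by simp) (by simp)
  have h0 : dsum (fun _ _ => 0) ({u, v} : Set V) = 0 := by simp [dsum]
  rw [h0] at h
  rw [show (2 : ℚ) = 0 + 2 * 1 by norm_num, ← h]
  classical
  unfold dsum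
  refine Finset.sum_congr rfl fun a _ => Finset.sum_congr rfl fun b _ => ?_
  have e1 : wt G w u v = 1 := by simp [wt, huv, hw1]
  have e2 : wt G w v u = 1 := by rw [wt, if_pos huv.symm, Sym2.eq_swap, hw1]; simp
  have e3 : wt G w u u = 0 := by simp [wt]
  have e4 : wt G w v v = 0 := by simp [wt]
  have := huv.ne
  simp only [bump, Sym2.eq_iff]
  grind

/-- The side `A = {u, v} ∪ C` satisfies `(♠)_δ` when `uv` gets weight `δ - 1`. It arises from `G` by
replacing the other components by the edge `uv`. By `Side.star` their weight dictates the change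
`t = δ - 2` required in `Sep.flats`. An edge of the side other than `uv` that is deletable or
contractible there is so in `G`, and `uv` itself is contractible in the side, hence not deletable by
`no_both`. -/
theorem Side.spade (h : Side G C u v) (hsp : SatisfiesSpade G δ w) (hδ : 2 < δ)
    (huv : G.Adj u v) (hw1 : w s(u, v) = 1) {A : Set V} (hA : A = {u, v} ∪ C) (hu : u ∈ A)
    (hv : v ∈ A) :
    ∃ w' : Sym2 A → ℕ, SatisfiesSpade (G.induce A) δ w' ∧ w' s(⟨u, hu⟩, ⟨v, hv⟩) = δ - 1 := by
  classical
  have hGe := sup_edge_of_adj huv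
  have hT := isTwoConnected_iff.1 hsp.1
  have hn := hsp.not_cn hδ huv hw1
  have hS := h.sep' huv.ne hn
  rw [← hA] at hS
  have hL := hS.link hT
  have hAB : Set.univ \ Aᶜ = A := by simp
  have hTA : Tc G A := by
    have := hS.tc_reduce hT
    rwa [hGe, hAB] at this
  have h2A : IsTwoConnected (G.induce A) := isTwoConnected_induce_iff.2 hTA
  -- `{u, v}` together with the other components is the complement of `C`, a good flat by `Side.star`
  have hCB : insert u (insert v Aᶜ) = Cᶜ := by
    have := h.uC
    have := h.vC
    ext z
    simp only [hA, Set.mem_insert_iff, Set.mem_compl_iff, Set.mem_union, Set.mem_singleton_iff]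
    grind
  have ht : dsum (wt G w) (insert u (insert v Aᶜ)) - dsum (wt G w) {u, v} =
      2 * ((δ : ℚ) - 2) + 2 * δ * (Aᶜ : Set V).ncard := by
    have h1 := h.star hsp huv
    have h2 : (insert u (insert v Aᶜ)).ncard = (Aᶜ : Set V).ncard + 2 := by
      rw [Set.ncard_insert_of_notMem, Set.ncard_insert_of_notMem]
      · simpa using hv
      · simp [hu, huv.ne]
    rw [dsum_pair huv hw1]
    rw [← hCB, h2] at h1
    push_cast at h1
    linarith
  have hq : ∀ a b, ¬ G.Adj a b → wt G w a b = 0 := wt_eq_zero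
  have hFl : Flats G Set.univ (wt G w) δ := fun S _ _ h1 h2 =>
    hsp.flat h1 (by rwa [← Set.compl_eq_univ_sdiff] at h2)
  have htot := hS.total hq hsp.total ht
  have hflats := hS.flats hT hq hFl ht
  rw [hAB] at htot hflats
  rw [hGe] at hflats
  have hwt := wt_update hδ huv hw1
  rw [← hwt] at htot hflats
  set w₁ := Function.update w s(u, v) (δ - 1) with hw₁
  have hwA : wt (G.induce A) (fun e => w₁ (e.map Subtype.val)) = fun a b : A => wt G w₁ a b := by
    funext a b
    simp [wt]
  have hcn : Cn G (A \ {u, v}) := by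
    convert h.cn using 1
    have := h.uC
    have := h.vC
    rw [hA]
    grind
  have hw1e : w₁ s(u, v) = δ - 1 := by simp [hw₁]
  have hw1n : ∀ e, e ≠ s(u, v) → w₁ e = w e := fun e he => by simp [hw₁, he]
  -- contractible edges of the side have weight `δ - 1`
  have hcontr : ∀ a b, G.Adj a b → a ∈ A → b ∈ A → Cn G (A \ {a, b}) → w₁ s(a, b) = δ - 1 := by
    intro a b hab ha hb hc
    by_cases he : s(a, b) = s(u, v)
    · rw [he, hw1e]
    · rw [hw1n _ he]
      refine hsp.2.1.2.2 _ hab ((contract_edge_iff hsp.1 hab.ne).2 ?_)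
      have := hS.flat_out hL (S := {a, b}) (by rw [hAB]; grind) (by
        rw [Sym2.eq_iff] at he
        have := huv.ne
        grind) (by rwa [hAB, hGe])
      rwa [← Set.compl_eq_univ_sdiff] at this
  refine ⟨fun e => w₁ (e.map Subtype.val), ⟨h2A, ⟨?_, ?_, ?_⟩, ?_, ?_⟩, by simpa using hw1e⟩
  · intro e he
    induction e using Sym2.ind with
    | _ a b =>
    by_cases h : s((a : V), (b : V)) = s(u, v)
    · right; simpa [h] using hw1e
    · have := hsp.2.1.1 s((a : V), (b : V)) he
      simpa [hw1n _ h] using this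
  · intro e he h2
    induction e using Sym2.ind with
    | _ a b =>
    have hab : G.Adj a b := he
    have hTd : Tc (G \ edge (a : V) b) A := by
      have h3 : Tc ((G \ edge (a : V) b).induce A) Set.univ :=
        (isTwoConnected_iff.1 h2).congr fun x _ y _ hxy => by
          simp only [deleteEdges_adj, Set.mem_singleton_iff, Sym2.eq_iff, comap_adj,
            Function.Embedding.subtype_apply, sdiff_adj, edge_adj, Subtype.ext_iff] at hxy ⊢
          grind
      simpa using tc_induce.1 h3
    by_cases he : s((a : V), (b : V)) = s(u, v)
    · exfalso
      have hee : edge (a : V) b = edge u v := by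
        simp [edge, he]
      rw [hee] at hTd
      exact no_both (by exact_mod_cast hδ) _ G A (wt G w₁) u v rfl huv hu hv wt_eq_zero htot
        hflats hTd hcn
    · show w₁ s((a : V), (b : V)) = 1
      rw [hw1n _ he]
      refine hsp.2.1.2.1 _ hab ?_
      have hL' : Link (G \ edge (a : V) b) Aᶜ u v := by
        have hag : ∀ c ∈ insert u (insert v Aᶜ), ∀ d ∈ insert u (insert v Aᶜ), G.Adj c d →
            (G \ edge (a : V) b).Adj c d := by
          intro c hc d hd hcd
          have h1 := a.2
          have h2 := b.2
          simp only [sdiff_adj, edge_adj]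
          rw [Sym2.eq_iff] at he
          simp only [Set.mem_insert_iff, Set.mem_compl_iff] at hc hd
          have := hcd.ne
          grind
        refine ⟨hL.fst.congr fun c hc d hd => hag c (by grind) d (by grind),
          hL.snd.congr fun c hc d hd => hag c (by grind) d (by grind), fun z hz P hP => ?_⟩
        exact hL.del z hz P fun c hc d hd hcd => hP c hc d hd (hag c hc.1 d hd.1 hcd)
      have huv' : (G \ edge (a : V) b).Adj u v := by
        simp only [sdiff_adj, edge_adj]
        rw [Sym2.eq_iff] at he
        grind
      have hz : ∃ z ∈ A, z ≠ u ∧ z ≠ v := by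
        obtain ⟨z, hz⟩ := hcn.1
        exact ⟨z, by grind⟩
      have := hL'.tc_glue hS.non huv.ne hS.xB hS.yB hu hv disjoint_compl_right hz
        (by rwa [sup_edge_of_adj huv'])
      rw [Set.union_compl_self] at this
      refine isTwoConnected_iff.2 (this.congr fun x _ y _ hxy => ?_)
      simp only [sdiff_adj, edge_adj, deleteEdges_adj, Set.mem_singleton_iff, Sym2.eq_iff] at hxy ⊢
      have := hxy.1.ne
      grind
  · intro e he h2
    induction e using Sym2.ind with
    | _ a b =>
    have hab : (G.induce A).Adj a b := he
    rw [contract_edge_iff h2A hab.ne, cn_induce] at h2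
    refine hcontr a b he a.2 b.2 ?_
    convert h2 using 1
    ext z
    simp [Subtype.ext_iff, eq_comm]
  · have h1 := dsum_wt_univ (G.induce A) (fun e => w₁ (e.map Subtype.val))
    rw [hwA, dsum_subtype] at h1
    rw [Set.image_univ, Subtype.range_coe, htot] at h1
    have hpos : 1 ≤ A.ncard := (Set.ncard_pos).2 ⟨u, hu⟩
    have : ((∑ᶠ e ∈ (G.induce A).edgeSet, w₁ (e.map Subtype.val) : ℕ) : ℚ) =
        ((δ * (A.ncard - 1) : ℕ) : ℚ) := by
      push_cast [hpos]
      push_cast at h1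
      linarith
    exact_mod_cast this
  · intro S hSf
    obtain ⟨h1, h2⟩ := (isGoodFlat_iff h2A).1 hSf
    rw [tc_induce] at h1
    rw [cn_induce] at h2
    have hd := dsum_wt (G.induce A) (fun e => w₁ (e.map Subtype.val)) S
    rw [hwA, dsum_subtype] at hd
    have hSc : (Subtype.val '' S).ncard = S.ncard :=
      Set.ncard_image_of_injective S Subtype.val_injective
    rw [← hSc]
    have hcompl : Subtype.val '' Sᶜ = A \ (Subtype.val '' S) := by
      ext z; simp
    rw [hcompl] at h2
    have hsub : Subtype.val '' S ⊆ A := by simp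
    generalize Subtype.val '' S = S' at *
    have hpos : 1 ≤ S'.ncard := (Set.ncard_pos).2 h1.1.1
    have hfin : dsum (wt G w₁) S' + 2 = 2 * δ * (S'.ncard - 1) := by
      by_cases hxy : u ∈ S' ∧ v ∈ S'
      · by_cases h3 : 3 ≤ S'.ncard
        · exact hflats S' hsub h3 h1 h2
        · have hs : {u, v} = S' := Set.eq_of_subset_of_ncard_le (by grind) (by
            rw [Set.ncard_pair huv.ne]; omega)
          rw [← hs, hwt, dsum_bump_of_mem huv.ne _ (by simp) (by simp), dsum_pair huv hw1,
            Set.ncard_pair huv.ne]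
          push_cast
          ring
      · rw [hwt, dsum_bump_of_not_mem huv.ne _ hxy]
        refine hsp.flat h1 ?_
        have := hS.flat_out hL (S := S') (by rwa [hAB]) hxy (by rwa [hAB, hGe])
        rwa [← Set.compl_eq_univ_sdiff] at this
    have : ((∑ᶠ e ∈ edgesIn (G.induce A) S, w₁ (e.map Subtype.val) : ℕ) : ℚ) + 1 =
        ((δ * (S'.ncard - 1) : ℕ) : ℚ) := by
      push_cast [hpos]
      push_cast at hd
      linarith
    exact_mod_cast this

end Sides

/-! ### Counting the components -/

section Components
variable {V : Type*} {G : SimpleGraph V} {w : Sym2 V → ℕ} {δ : ℕ} {u v : V}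

/-- The components of `G ∖ {u, v}` in the sense of Mathlib are sides. -/
theorem comp_side (c : (G.induce {x : V | x ≠ u ∧ x ≠ v}).ConnectedComponent) :
    Side G (Subtype.val '' c.supp) u v := by
  refine ⟨?_, ?_, ?_, ?_⟩
  · rintro ⟨x, -, hx⟩; exact x.2.1 hx
  · rintro ⟨x, -, hx⟩; exact x.2.2 hx
  · exact cn_induce.1 (connected_induce_iff.1 c.connected_toSimpleGraph)
  · rintro _ ⟨b, hb, rfl⟩ a hba
    by_cases ha : a ≠ u ∧ a ≠ v
    · left
      refine ⟨⟨a, ha⟩, ?_, rfl⟩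
      rw [ConnectedComponent.mem_supp_iff] at hb ⊢
      rw [← hb]
      exact ConnectedComponent.sound (Adj.reachable hba.symm)
    · grind

variable [Fintype V]

/-- Each component `C` accounts for weight `δ|C| + 1`, by `Side.star`. Every edge except `uv` is
accounted for once, so `δ(|V| - 1) - 1 = δ(|V| - 2) + k` for `k` components. -/
theorem comp_count (hsp : SatisfiesSpade G δ w) (hδ : 2 < δ)
    (huv : G.Adj u v) (hw1 : w s(u, v) = 1) :
    Nat.card (G.induce {x : V | x ≠ u ∧ x ≠ v}).ConnectedComponent = δ - 1 := by
  classical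
  set K : Set V := {x : V | x ≠ u ∧ x ≠ v} with hK
  let Q := (G.induce K).ConnectedComponent
  let C : Q → Set V := fun c => Subtype.val '' c.supp
  have hC : ∀ (a : V) (ha : a ∈ K) (c : Q), a ∈ C c ↔ (G.induce K).connectedComponentMk ⟨a, ha⟩ = c
      := by
    intro a ha c
    constructor
    · rintro ⟨b, hb, rfl⟩; exact hb
    · intro h; exact ⟨⟨a, ha⟩, h, rfl⟩
  have hC' : ∀ (a : V) (c : Q), a ∈ C c → a ∈ K := by
    rintro a c ⟨b, hb, rfl⟩; exact b.2
  have hside : ∀ c : Q, Side G (C c) u v := fun c => comp_side c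
  -- the edges meeting the component `c` have weight `δ|c| + 1`
  have hcard : ∀ c : Q, dsum (wt G w) Set.univ - dsum (wt G w) (C c)ᶜ
      = 2 * δ * ((C c).ncard : ℚ) + 2 := by
    intro c
    have h1 := (hside c).star hsp huv
    have h2 := hsp.total
    have h3 := Set.ncard_add_ncard_compl (C c)
    rw [← Set.ncard_univ] at h3
    rw [h2, ← h3]
    push_cast
    linarith
  -- every edge other than `uv` meets exactly one component
  have hsum1 : ∑ c : Q, (dsum (wt G w) Set.univ - dsum (wt G w) (C c)ᶜ) =
      dsum (wt G w) Set.univ - dsum (wt G w) {u, v} := by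
    unfold dsum
    simp only [← Finset.sum_sub_distrib]
    rw [Finset.sum_comm]
    refine Finset.sum_congr rfl fun a _ => ?_
    rw [Finset.sum_comm]
    refine Finset.sum_congr rfl fun b _ => ?_
    by_cases hab : G.Adj a b
    · have main : ∀ x y : V, G.Adj x y → ∀ hx : x ∈ K, ∀ c : Q, (x ∈ C c ∨ y ∈ C c) ↔
          c = (G.induce K).connectedComponentMk ⟨x, hx⟩ := by
        intro x y hxy hx c
        rw [hC x hx c]
        constructor
        · rintro (h | h)
          · exact h.symm
          · have := (hside c).cut y h x hxy.symm
            rw [← (hC x hx c).1]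
            have := hx.1
            have := hx.2
            grind
        · intro h; exact Or.inl h.symm
      by_cases haK : a ∈ K
      · trans ∑ c : Q, if c = (G.induce K).connectedComponentMk ⟨a, haK⟩ then wt G w a b else 0
        · refine Finset.sum_congr rfl fun c _ => ?_
          have := main a b hab haK c
          simp only [Set.mem_univ, Set.mem_compl_iff]
          grind
        · have h1 := haK.1
          have h2 := haK.2
          simp [h1, h2]
      · by_cases hbK : b ∈ K
        · trans ∑ c : Q, if c = (G.induce K).connectedComponentMk ⟨b, hbK⟩ then wt G w a b else 0
          · refine Finset.sum_congr rfl fun c _ => ?_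
            have := main b a hab.symm hbK c
            simp only [Set.mem_univ, Set.mem_compl_iff]
            grind
          · have h1 := hbK.1
            have h2 := hbK.2
            simp [h1, h2]
        · have h1 : ∀ c, a ∉ C c := fun c h => haK (hC' a c h)
          have h2 : ∀ c, b ∉ C c := fun c h => hbK (hC' b c h)
          have h3 : a = u ∨ a = v := by simp only [hK, Set.mem_ofPred_eq] at haK; grind
          have h4 : b = u ∨ b = v := by simp only [hK, Set.mem_ofPred_eq] at hbK; grind
          simp [h1, h2, h3, h4]
    · simp [wt_eq_zero a b hab]
  have hsum2 : ∑ c : Q, ((C c).ncard : ℚ) = (Set.univ : Set V).ncard - 2 := by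
    have h1 : ∀ S : Set V, (S.ncard : ℚ) = ∑ a, if a ∈ S then 1 else 0 := by
      intro S
      rw [Set.ncard_eq_toFinset_card']
      simp
    have h2 : K.ncard + 2 = (Set.univ : Set V).ncard := by
      have h := Set.ncard_add_ncard_compl ({u, v} : Set V)
      rw [Set.ncard_pair huv.ne] at h
      have : ({u, v} : Set V)ᶜ = K := by ext; simp [hK]
      rw [Set.ncard_univ, ← h, this]; omega
    rw [← h2]
    push_cast
    rw [add_sub_cancel_right, h1 K]
    simp only [h1]
    rw [Finset.sum_comm]
    refine Finset.sum_congr rfl fun a _ => ?_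
    by_cases ha : a ∈ K
    · simp only [hC a ha]
      simp [ha]
    · have : ∀ c, a ∉ C c := fun c h => ha (hC' a c h)
      simp [this, ha]
  have h1 := hsp.total
  have h2 := dsum_pair huv hw1
  rw [Finset.sum_congr rfl fun c _ => hcard c, Finset.sum_add_distrib, ← Finset.mul_sum, hsum2,
    h1, h2] at hsum1
  simp only [Finset.sum_const, Finset.card_univ, nsmul_eq_mul] at hsum1
  rw [Nat.card_eq_fintype_card]
  have : ((Fintype.card Q : ℕ) : ℚ) + 1 = δ := by linarith
  have : Fintype.card Q + 1 = δ := by exact_mod_cast this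
  show Fintype.card Q = _
  omega

end Components

/-! ### The decomposition -/

theorem stmt9 {δ : ℕ} (hδ : 2 < δ) {V : Type*} [Fintype V] [DecidableEq V]
    (G : SimpleGraph V) (w : Sym2 V → ℕ) (hsp : SatisfiesSpade G δ w)
    (u v : V) (huv : G.Adj u v) (hw1 : w s(u, v) = 1) :
    Nat.card (G.induce {x : V | x ≠ u ∧ x ≠ v}).ConnectedComponent = δ - 1 ∧
    (∀ c : (G.induce {x : V | x ≠ u ∧ x ≠ v}).ConnectedComponent,
      ∃ w' : Sym2 ↥({u, v} ∪ Subtype.val '' c.supp : Set V) → ℕ,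
        SatisfiesSpade (G.induce ({u, v} ∪ Subtype.val '' c.supp : Set V)) δ w' ∧
        w' s(⟨u, by simp⟩, ⟨v, by simp⟩) = δ - 1) ∧
    IsGluing
      (fun c : (G.induce {x : V | x ≠ u ∧ x ≠ v}).ConnectedComponent =>
        G.induce ({u, v} ∪ Subtype.val '' c.supp : Set V))
      (fun c => s((⟨u, by simp⟩ : ↥({u, v} ∪ Subtype.val '' c.supp : Set V)), ⟨v, by simp⟩))
      G u v := by
  have hcount := comp_count hsp hδ huv hw1
  refine ⟨hcount, fun c => (comp_side c).spade hsp hδ huv hw1 rfl _ _, huv.ne, huv,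
    fun c => Subtype.val, fun c => Subtype.val_injective, fun x => ?_, fun c => rfl,
    fun c d hcd => ?_, fun x y => ⟨fun hxy => ?_, ?_⟩⟩
  · by_cases hx : x ≠ u ∧ x ≠ v
    · exact ⟨(G.induce {x : V | x ≠ u ∧ x ≠ v}).connectedComponentMk ⟨x, hx⟩,
        ⟨x, Or.inr ⟨⟨x, hx⟩, rfl, rfl⟩⟩, rfl⟩
    · have hne : Nonempty (G.induce {x : V | x ≠ u ∧ x ≠ v}).ConnectedComponent :=
        (Nat.card_pos_iff.1 (by omega)).1
      obtain ⟨c⟩ := hne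
      exact ⟨c, ⟨x, Or.inl (by simp; grind)⟩, rfl⟩
  · rw [Subtype.range_coe, Subtype.range_coe, ← Set.union_inter_distrib_left,
      Set.union_eq_left.2]
    rintro _ ⟨⟨a, ha, rfl⟩, ⟨b, hb, hba⟩⟩
    exact absurd (ha.symm.trans (by rw [← Subtype.ext hba]; exact hb)) hcd
  · have main : ∀ a b, G.Adj a b → (ha : a ≠ u ∧ a ≠ v) → ∃ c :
        (G.induce {x : V | x ≠ u ∧ x ≠ v}).ConnectedComponent,
        a ∈ ({u, v} ∪ Subtype.val '' c.supp : Set V) ∧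
        b ∈ ({u, v} ∪ Subtype.val '' c.supp : Set V) := by
      intro a b hab ha
      have hm : a ∈ Subtype.val '' ((G.induce {x : V | x ≠ u ∧ x ≠ v}).connectedComponentMk
        ⟨a, ha⟩).supp := ⟨⟨a, ha⟩, rfl, rfl⟩
      refine ⟨_, Or.inr hm, ?_⟩
      rcases (comp_side _).cut a hm b hab with h | h | h
      · exact Or.inr h
      · simp [h]
      · simp [h]
    obtain ⟨c, hx, hy⟩ : ∃ c : (G.induce {x : V | x ≠ u ∧ x ≠ v}).ConnectedComponent,
        x ∈ ({u, v} ∪ Subtype.val '' c.supp : Set V) ∧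
        y ∈ ({u, v} ∪ Subtype.val '' c.supp : Set V) := by
      by_cases hx : x ≠ u ∧ x ≠ v
      · exact main x y hxy hx
      by_cases hy : y ≠ u ∧ y ≠ v
      · obtain ⟨c, h1, h2⟩ := main y x hxy.symm hy
        exact ⟨c, h2, h1⟩
      obtain ⟨c⟩ : Nonempty (G.induce {x : V | x ≠ u ∧ x ≠ v}).ConnectedComponent :=
        (Nat.card_pos_iff.1 (by omega)).1
      exact ⟨c, Or.inl (by simp; grind), Or.inl (by simp; grind)⟩
    exact ⟨c, ⟨x, hx⟩, ⟨y, hy⟩, hxy, rfl, rfl⟩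
  · rintro ⟨c, a, b, hab, rfl, rfl⟩
    exact hab

end Gor
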